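/- arXiv:2209.03852 — 3 statements merged into one kernel-verified Lean document; each statement's English description precedes it below -/
import Mathlib

section
/- Let H²_β be a weighted Hardy space of polynomial growth. If ψ is analytic on an open neighborhood of the closed unit disk 𝔻̄ and ψ(𝔻) ⊆ 𝔻, then the composition operator C_ψ is bounded on H²_β. -/
noncomputable section

open Complex Filter Topology

/-- The sequence-space (ℓ²) model of a weighted Hardy space `H²_β`.
An element `a : H2` represents the analytic function whose `k`-th Taylor
coefficient is `a k / β k` (so that `‖a‖` is exactly the `H²_β`-norm). -/
abbrev H2 : Type := lp (fun _ : ℕ => ℂ) 2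

/-- The direct sum (ℓ²-sense) of `m` copies of `H2`. -/
abbrev Hm (m : ℕ) : Type := PiLp 2 (fun _ : Fin m => H2)

/-- The open unit disk 𝔻 ⊆ ℂ. -/
def unitDisk : Set ℂ := Metric.ball 0 1

/-- `β_0 = 1` and `β_k = ∏_{j=1}^k w_j`. -/
def betaSeq (w : ℕ → ℝ) (k : ℕ) : ℝ := ∏ j ∈ Finset.Icc 1 k, w j

/-- The analytic function on 𝔻 represented by the vector `a` in the model of `H²_β`:
`f(z) = ∑_k (a k / β k) z^k`. -/
def repFun (β : ℕ → ℝ) (a : H2) (z : ℂ) : ℂ := ∑' k, (a k / (β k : ℂ)) * z ^ k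

/-- `T` is (the ℓ²-model of) the multiplication operator `M_g` on `H²_β`.
Existence of such a `T` says precisely that `M_g` is bounded on `H²_β`. -/
def RepMul (β : ℕ → ℝ) (g : ℂ → ℂ) (T : H2 →L[ℂ] H2) : Prop :=
  ∀ a : H2, ∀ z ∈ unitDisk, repFun β (T a) z = g z * repFun β a z

/-- `T` is (the ℓ²-model of) the composition operator `C_ψ` on `H²_β`.
Existence of such a `T` says precisely that `C_ψ` is bounded on `H²_β`. -/
def RepComp (β : ℕ → ℝ) (ψ : ℂ → ℂ) (T : H2 →L[ℂ] H2) : Prop :=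
  ∀ a : H2, ∀ z ∈ unitDisk, repFun β (T a) z = repFun β a (ψ z)

/-- The Möbius factor `φ_{z₀}(z) = (z₀ - z)/(1 - conj z₀ · z)`. -/
def mobius (z₀ z : ℂ) : ℂ := (z₀ - z) / (1 - (starRingEnd ℂ) z₀ * z)

/-- `φ` belongs to `Aut(𝔻)`, i.e. `φ(z) = e^{iθ}(z₀ - z)/(1 - conj z₀ · z)`. -/
def IsDiskAut (φ : ℂ → ℂ) : Prop :=
  ∃ (θ : ℝ) (z₀ : ℂ), z₀ ∈ unitDisk ∧
    ∀ z, φ z = Complex.exp (θ * Complex.I) * mobius z₀ z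

/-- `B` is a finite Blaschke product of order `m`. -/
def IsBlaschke (m : ℕ) (B : ℂ → ℂ) : Prop :=
  ∃ (θ : ℝ) (zs : Fin m → ℂ), (∀ j, zs j ∈ unitDisk) ∧
    ∀ z, B z = Complex.exp (θ * Complex.I) * ∏ j, mobius (zs j) z

/-- `w` is a positive weight sequence tending to `1` such that the weighted Hardy
space `H²_β` is of polynomial growth: `sup_k (k+1)|w_k - 1| < ∞`. -/
def PolyGrowth (w : ℕ → ℝ) : Prop :=
  (∀ k, 1 ≤ k → 0 < w k) ∧ Tendsto w atTop (nhds 1) ∧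
    ∃ M : ℝ, ∀ k : ℕ, 1 ≤ k → ((k : ℝ) + 1) * |w k - 1| ≤ M

/-- `f` is analytic on an open neighbourhood of the closed unit disk. -/
def AnalyticOnClosedDisk (f : ℂ → ℂ) : Prop :=
  ∃ U : Set ℂ, IsOpen U ∧ Metric.closedBall (0:ℂ) 1 ⊆ U ∧ AnalyticOnNhd ℂ f U

/-! In the orthonormal basis `z ^ n / β_n`, `C_ψ` has the matrix `(β_k / β_n) b_{n,k}`, where the
`b_{n,k}` are the Taylor coefficients of `ψ ^ n`. Without the weights this matrix is bounded on `ℓ²`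
by Littlewood's subordination principle. Let `M` be large. For `k ≥ M n`, Cauchy's estimate on a
circle of radius larger than `1` makes `b_{n,k}` decay geometrically in `n + k`; for `n ≥ M k` so
does Cauchy's estimate on a circle inside the disk, where `|ψ|` is bounded away from `1`. As the
weights and their inverses grow at most polynomially, this part of the weighted matrix is
Hilbert–Schmidt. In the remaining cone the weights are comparable, hence constant up to bounded
factors on blocks of indices with the same base-`M` logarithm, and each block of rows meets at most
three blocks of columns. -/

theorem norm_sum_sq_le_card_mul_sum_norm_sq {ι E : Type*} [SeminormedAddCommGroup E] (s : Finset ι)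
    (f : ι → E) : ‖∑ i ∈ s, f i‖ ^ 2 ≤ s.card * ∑ i ∈ s, ‖f i‖ ^ 2 :=
  (pow_le_pow_left₀ (norm_nonneg _) (norm_sum_le _ _) 2).trans sq_sum_le_card_mul_sum_sq

/-- The matrix `A` acts boundedly from `ℓ²(ι)` to `ℓ²(κ)` with squared operator norm at most `C`.
This is tested on finite sections, so that no convergence of the rows is presupposed. -/
structure IsL2BoundedBy {𝕜 ι κ : Type*} [RCLike 𝕜] (A : Matrix κ ι 𝕜) (C : ℝ) : Prop where
  nonneg : 0 ≤ C
  sum_norm_sq_le : ∀ (t : Finset κ) (s : Finset ι) (x : ι → 𝕜),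
    ∑ k ∈ t, ‖∑ n ∈ s, A k n * x n‖ ^ 2 ≤ C * ∑ n ∈ s, ‖x n‖ ^ 2

namespace IsL2BoundedBy

variable {𝕜 ι κ : Type*} [RCLike 𝕜] {A B : Matrix κ ι 𝕜} {C C' : ℝ}

theorem add (hA : IsL2BoundedBy A C) (hB : IsL2BoundedBy B C') :
    IsL2BoundedBy (A + B) (2 * (C + C')) where
  nonneg := by linarith [hA.nonneg, hB.nonneg]
  sum_norm_sq_le t s x := by
    calc ∑ k ∈ t, ‖∑ n ∈ s, (A + B) k n * x n‖ ^ 2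
        ≤ ∑ k ∈ t, 2 * (‖∑ n ∈ s, A k n * x n‖ ^ 2 + ‖∑ n ∈ s, B k n * x n‖ ^ 2) := by
          gcongr with k
          simp only [Matrix.add_apply, add_mul, Finset.sum_add_distrib]
          exact (pow_le_pow_left₀ (norm_nonneg _) (norm_add_le _ _) 2).trans add_sq_le
      _ = 2 * (∑ k ∈ t, ‖∑ n ∈ s, A k n * x n‖ ^ 2 + ∑ k ∈ t, ‖∑ n ∈ s, B k n * x n‖ ^ 2) := by
          rw [← Finset.mul_sum, Finset.sum_add_distrib]
      _ ≤ 2 * (C * ∑ n ∈ s, ‖x n‖ ^ 2 + C' * ∑ n ∈ s, ‖x n‖ ^ 2) := by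
          gcongr
          exacts [hA.sum_norm_sq_le t s x, hB.sum_norm_sq_le t s x]
      _ = 2 * (C + C') * ∑ n ∈ s, ‖x n‖ ^ 2 := by ring

theorem of_norm_le_mul {u : κ → ℝ} {v : ι → ℝ} (hu : Summable fun k ↦ u k ^ 2)
    (hv : Summable fun n ↦ v n ^ 2) (hA : ∀ k n, ‖A k n‖ ≤ u k * v n) :
    IsL2BoundedBy A ((∑' k, u k ^ 2) * ∑' n, v n ^ 2) where
  nonneg := mul_nonneg (tsum_nonneg fun _ ↦ sq_nonneg _) (tsum_nonneg fun _ ↦ sq_nonneg _)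
  sum_norm_sq_le t s x := by
    have row_le (k : κ) : ‖∑ n ∈ s, A k n * x n‖ ^ 2
        ≤ u k ^ 2 * ((∑' n, v n ^ 2) * ∑ n ∈ s, ‖x n‖ ^ 2) := by
      have h : ‖∑ n ∈ s, A k n * x n‖ ≤ u k * ∑ n ∈ s, v n * ‖x n‖ := by
        rw [Finset.mul_sum]
        refine norm_sum_le_of_le s fun n _ ↦ ?_
        rw [norm_mul, ← mul_assoc]
        gcongr
        exact hA k n
      calc ‖∑ n ∈ s, A k n * x n‖ ^ 2 ≤ (u k * ∑ n ∈ s, v n * ‖x n‖) ^ 2 := by gcongr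
        _ = u k ^ 2 * (∑ n ∈ s, v n * ‖x n‖) ^ 2 := mul_pow _ _ _
        _ ≤ u k ^ 2 * ((∑ n ∈ s, v n ^ 2) * ∑ n ∈ s, ‖x n‖ ^ 2) := by
          gcongr
          exact Finset.sum_mul_sq_le_sq_mul_sq _ _ _
        _ ≤ u k ^ 2 * ((∑' n, v n ^ 2) * ∑ n ∈ s, ‖x n‖ ^ 2) := by
          gcongr
          exact hv.sum_le_tsum s fun _ _ ↦ sq_nonneg _
    calc ∑ k ∈ t, ‖∑ n ∈ s, A k n * x n‖ ^ 2
        ≤ (∑ k ∈ t, u k ^ 2) * ((∑' n, v n ^ 2) * ∑ n ∈ s, ‖x n‖ ^ 2) := by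
          rw [Finset.sum_mul]
          exact Finset.sum_le_sum fun k _ ↦ row_le k
      _ ≤ (∑' k, u k ^ 2) * ((∑' n, v n ^ 2) * ∑ n ∈ s, ‖x n‖ ^ 2) := by
          gcongr
          exact hu.sum_le_tsum t fun _ _ ↦ sq_nonneg _
      _ = (∑' k, u k ^ 2) * (∑' n, v n ^ 2) * ∑ n ∈ s, ‖x n‖ ^ 2 := (mul_assoc _ _ _).symm

theorem sum_norm_sq_weighted_le (hA : IsL2BoundedBy A C) {u : κ → 𝕜} {v : ι → 𝕜} {D : ℝ}
    {t : Finset κ} {s : Finset ι} (huv : ∀ k ∈ t, ∀ n ∈ s, ‖u k‖ * ‖v n‖ ≤ D) (x : ι → 𝕜) :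
    ∑ k ∈ t, ‖∑ n ∈ s, u k * v n * A k n * x n‖ ^ 2 ≤ D ^ 2 * C * ∑ n ∈ s, ‖x n‖ ^ 2 := by
  obtain rfl | ht := t.eq_empty_or_nonempty
  · rw [Finset.sum_empty]
    have := hA.nonneg
    positivity
  obtain ⟨m, hm, hmax⟩ := t.exists_max_image (fun k ↦ ‖u k‖) ht
  calc ∑ k ∈ t, ‖∑ n ∈ s, u k * v n * A k n * x n‖ ^ 2
      = ∑ k ∈ t, ‖u k‖ ^ 2 * ‖∑ n ∈ s, A k n * (v n * x n)‖ ^ 2 := by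
        refine Finset.sum_congr rfl fun k _ ↦ ?_
        rw [← mul_pow, ← norm_mul, Finset.mul_sum]
        congr! 3 with n
        ring
    _ ≤ ‖u m‖ ^ 2 * ∑ k ∈ t, ‖∑ n ∈ s, A k n * (v n * x n)‖ ^ 2 := by
        rw [Finset.mul_sum]
        gcongr with k hk
        exact hmax k hk
    _ ≤ ‖u m‖ ^ 2 * (C * ∑ n ∈ s, ‖v n * x n‖ ^ 2) := by
        gcongr
        exact hA.sum_norm_sq_le t s _
    _ = C * ∑ n ∈ s, (‖u m‖ * ‖v n‖) ^ 2 * ‖x n‖ ^ 2 := by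
        simp only [norm_mul, mul_pow, Finset.mul_sum]
        exact Finset.sum_congr rfl fun n _ ↦ by ring
    _ ≤ C * ∑ n ∈ s, D ^ 2 * ‖x n‖ ^ 2 := by
        gcongr with n hn
        exacts [hA.nonneg, huv m hm n hn]
    _ = D ^ 2 * C * ∑ n ∈ s, ‖x n‖ ^ 2 := by
        rw [← Finset.mul_sum]
        ring

theorem weighted_blockBanded {J : Type*} [DecidableEq J] (hA : IsL2BoundedBy A C) {u : κ → 𝕜}
    {v : ι → 𝕜} {D : ℝ} {m : ℕ} {N : κ → Finset J} {q : ι → J} (hN : ∀ k, (N k).card ≤ m)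
    (huv : ∀ k n, q n ∈ N k → ‖u k‖ * ‖v n‖ ≤ D) :
    IsL2BoundedBy (Matrix.of fun k n ↦ if q n ∈ N k then u k * v n * A k n else 0 : Matrix κ ι 𝕜)
      (m * (D ^ 2 * C)) where
  nonneg := by
    have := hA.nonneg
    positivity
  sum_norm_sq_le t s x := by
    let block (k : κ) (j : J) : 𝕜 := ∑ n ∈ s with q n = j, u k * v n * A k n * x n
    have row_eq (k : κ) : ∑ n ∈ s, (if q n ∈ N k then u k * v n * A k n else 0) * x n
        = ∑ j ∈ N k, block k j := by
      simp only [ite_mul, zero_mul, ← Finset.sum_filter]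
      refine (Finset.sum_fiberwise_of_maps_to (fun n hn ↦ (Finset.mem_filter.1 hn).2) _).symm.trans
        (Finset.sum_congr rfl fun j hj ↦ Finset.sum_congr ?_ fun _ _ ↦ rfl)
      ext n
      simp only [Finset.mem_filter]
      grind
    have block_le (j : J) : ∑ k ∈ t with j ∈ N k, ‖block k j‖ ^ 2
        ≤ D ^ 2 * C * ∑ n ∈ s with q n = j, ‖x n‖ ^ 2 :=
      hA.sum_norm_sq_weighted_le (by grind) x
    calc ∑ k ∈ t, ‖∑ n ∈ s, (if q n ∈ N k then u k * v n * A k n else 0) * x n‖ ^ 2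
        ≤ ∑ k ∈ t, m * ∑ j ∈ N k, ‖block k j‖ ^ 2 := by
          gcongr with k
          rw [row_eq]
          refine (norm_sum_sq_le_card_mul_sum_norm_sq _ _).trans ?_
          gcongr
          exact hN k
      _ = m * ∑ j ∈ t.biUnion N, ∑ k ∈ t with j ∈ N k, ‖block k j‖ ^ 2 := by
          rw [← Finset.mul_sum]
          congr 1
          refine Finset.sum_comm' fun k j ↦ ?_
          simp only [Finset.mem_filter, Finset.mem_biUnion]
          grind
      _ ≤ m * ∑ j ∈ t.biUnion N, D ^ 2 * C * ∑ n ∈ s with q n = j, ‖x n‖ ^ 2 := by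
          gcongr with j
          exact block_le j
      _ ≤ m * (D ^ 2 * C) * ∑ n ∈ s, ‖x n‖ ^ 2 := by
          rw [← Finset.mul_sum, ← mul_assoc]
          have := hA.nonneg
          gcongr
          exact Finset.sum_fiberwise_le_sum_of_sum_fiber_nonneg fun _ _ ↦
            Finset.sum_nonneg fun _ _ ↦ sq_nonneg _

theorem row_sum_norm_sq_le (hA : IsL2BoundedBy A C) (k : κ) (s : Finset ι) :
    ∑ n ∈ s, ‖A k n‖ ^ 2 ≤ C := by
  set Q := ∑ n ∈ s, ‖A k n‖ ^ 2
  have hQ : 0 ≤ Q := Finset.sum_nonneg fun _ _ ↦ sq_nonneg _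
  have dual : ∑ n ∈ s, A k n * star (A k n) = (Q : 𝕜) := by
    simp [Q, RCLike.mul_conj]
  have h : Q ^ 2 ≤ C * Q := by
    have := hA.sum_norm_sq_le {k} s fun n ↦ star (A k n)
    rwa [Finset.sum_singleton, dual, RCLike.norm_ofReal, sq_abs,
      Finset.sum_congr rfl fun n _ ↦ by rw [norm_star]] at this
  nlinarith [hA.nonneg, hQ]

/-- The `k`-th row of `A`, conjugated so that the inner product with it is the action of the row. -/
def row (hA : IsL2BoundedBy A C) (k : κ) : lp (fun _ : ι ↦ 𝕜) 2 :=
  ⟨fun n ↦ star (A k n), memℓp_gen' fun s ↦ by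
    simpa using hA.row_sum_norm_sq_le k s⟩

theorem sum_norm_sq_inner_row_le (hA : IsL2BoundedBy A C) (x : lp (fun _ : ι ↦ 𝕜) 2)
    (t : Finset κ) : ∑ k ∈ t, ‖inner 𝕜 (hA.row k) x‖ ^ 2 ≤ C * ‖x‖ ^ 2 := by
  have lim : Tendsto (fun s : Finset ι ↦ ∑ k ∈ t, ‖∑ n ∈ s, A k n * x n‖ ^ 2) atTop
      (𝓝 (∑ k ∈ t, ‖inner 𝕜 (hA.row k) x‖ ^ 2)) :=
    tendsto_finsetSum _ fun k _ ↦ by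
      simpa [row, mul_comm] using ((lp.hasSum_inner (𝕜 := 𝕜) (hA.row k) x).norm).pow 2
  refine le_of_tendsto' lim fun s ↦ (hA.sum_norm_sq_le t s x).trans ?_
  have := hA.nonneg
  gcongr
  simpa using lp.sum_rpow_le_norm_rpow (p := 2) (by norm_num) x s

theorem exists_clm_single_apply [DecidableEq ι] (hA : IsL2BoundedBy A C) :
    ∃ T : lp (fun _ : ι ↦ 𝕜) 2 →L[𝕜] lp (fun _ : κ ↦ 𝕜) 2,
      ∀ n k, T (lp.single 2 n 1) k = A k n := by
  let T₀ : lp (fun _ : ι ↦ 𝕜) 2 →ₗ[𝕜] lp (fun _ : κ ↦ 𝕜) 2 :=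
    { toFun x := ⟨fun k ↦ inner 𝕜 (hA.row k) x, memℓp_gen' fun t ↦ by
        simpa using hA.sum_norm_sq_inner_row_le x t⟩
      map_add' x y := by
        ext k
        exact inner_add_right _ _ _
      map_smul' c x := by
        ext k
        exact inner_smul_right _ _ _ }
  have bound (x) : ‖T₀ x‖ ≤ √C * ‖x‖ := by
    refine lp.norm_le_of_forall_sum_le (p := 2) (by norm_num) (by positivity) fun t ↦ ?_
    simpa [mul_pow, Real.sq_sqrt hA.nonneg, T₀] using hA.sum_norm_sq_inner_row_le x t
  refine ⟨T₀.mkContinuous √C bound, fun n k ↦ ?_⟩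
  change inner 𝕜 (hA.row k) (lp.single 2 n 1) = A k n
  rw [lp.inner_single_right]
  simp [row]

end IsL2BoundedBy

/-- The `k`-th coefficient of the Taylor expansion of `f` at `c`. -/
def taylorCoeff (f : ℂ → ℂ) (c : ℂ) (k : ℕ) : ℂ := iteratedDeriv k f c / k.factorial

section TaylorCoeff

variable {f : ℂ → ℂ} {c : ℂ} {r : ℝ}

theorem hasSum_taylorCoeff (hf : DifferentiableOn ℂ f (Metric.ball c r)) {z : ℂ}
    (hz : z ∈ Metric.ball c r) : HasSum (fun k ↦ taylorCoeff f c k * (z - c) ^ k) (f z) := by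
  simpa only [taylorCoeff, smul_eq_mul, div_eq_inv_mul, mul_assoc, mul_comm ((z - c) ^ _)] using
    Complex.hasSum_taylorSeries_on_ball hf hz

theorem norm_taylorCoeff_le {S : ℝ} (hr : 0 < r) (hf : DiffContOnCl ℂ f (Metric.ball c r))
    (hS : ∀ z ∈ Metric.sphere c r, ‖f z‖ ≤ S) (k : ℕ) : ‖taylorCoeff f c k‖ ≤ S * r⁻¹ ^ k := by
  rw [taylorCoeff, norm_div, Complex.norm_natCast, div_le_iff₀ (by positivity)]
  refine (Complex.norm_iteratedDeriv_le_of_forall_mem_sphere_norm_le k hr hf hS).trans_eq ?_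
  rw [inv_pow]
  ring

theorem taylorCoeff_fun_sum {ι : Type*} (s : Finset ι) (x : ι → ℂ) {F : ι → ℂ → ℂ}
    (hF : ∀ i ∈ s, AnalyticAt ℂ (F i) c) (k : ℕ) :
    taylorCoeff (fun z ↦ ∑ i ∈ s, x i * F i z) c k = ∑ i ∈ s, taylorCoeff (F i) c k * x i := by
  simp only [taylorCoeff]
  rw [iteratedDeriv_fun_sum fun i hi ↦ contDiffAt_const.mul (hF i hi).contDiffAt, Finset.sum_div]
  refine Finset.sum_congr rfl fun i _ ↦ ?_
  rw [iteratedDeriv_const_mul_field]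
  ring

theorem circleAverage_inv_pow_mul (hr : 0 < r) (hf : DiffContOnCl ℂ f (Metric.ball c r)) (k : ℕ) :
    Real.circleAverage (fun z ↦ ((z - c) ^ k)⁻¹ * f z) c r = taylorCoeff f c k := by
  have cauchy := DiffContOnCl.circleIntegral_one_div_sub_center_pow_smul hr k hf
  have integrand_eq (z : ℂ) :
      (z - c)⁻¹ • (((z - c) ^ k)⁻¹ * f z) = (1 / (z - c) ^ (k + 1)) • f z := by
    simp only [smul_eq_mul, one_div, pow_succ, mul_inv]
    ring
  rw [Real.circleAverage_eq_circleIntegral hr.ne', taylorCoeff]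
  simp only [integrand_eq]
  rw [cauchy, smul_smul, smul_eq_mul, mul_div_assoc', inv_mul_cancel₀ Complex.two_pi_I_ne_zero,
    one_div_mul_eq_div]

theorem fourierCoeffOn_comp_circleMap (hr : 0 < r) (hf : DiffContOnCl ℂ f (Metric.ball c r))
    (k : ℕ) : fourierCoeffOn Real.two_pi_pos (fun θ ↦ f (circleMap c r θ)) k =
      (r : ℂ) ^ k * taylorCoeff f c k := by
  have hr' : (r : ℂ) ≠ 0 := by exact_mod_cast hr.ne'
  rw [← circleAverage_inv_pow_mul hr hf, fourierCoeffOn_eq_integral, Real.circleAverage_def,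
    sub_zero, one_div, mul_smul_comm, ← intervalIntegral.integral_const_mul]
  congr 1
  refine intervalIntegral.integral_congr fun θ _ ↦ ?_
  simp only [smul_eq_mul, circleMap_sub_center, circleMap_zero_pow]
  rw [circleMap_zero, fourier_coe_apply, mul_inv, ← mul_assoc, Complex.ofReal_pow,
    mul_inv_cancel_left₀ (pow_ne_zero k hr'), ← Complex.exp_neg]
  congr 2
  push_cast
  field_simp

theorem sum_norm_sq_taylorCoeff_le (hr : 0 < r) (hf : DiffContOnCl ℂ f (Metric.ball c r))
    (t : Finset ℕ) : ∑ k ∈ t, ‖taylorCoeff f c k‖ ^ 2 * (r ^ k) ^ 2 ≤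
      Real.circleAverage (fun z ↦ ‖f z‖ ^ 2) c r := by
  have cont : Continuous fun θ ↦ f (circleMap c r θ) :=
    hf.continuousOn_ball.comp_continuous (continuous_circleMap c r) fun θ ↦
      Metric.sphere_subset_closedBall (circleMap_mem_sphere c hr.le θ)
  have memLp : MeasureTheory.MemLp (fun θ ↦ f (circleMap c r θ)) 2
      (MeasureTheory.volume.restrict (Set.Ioc 0 (2 * Real.pi))) :=
    (MeasureTheory.memLp_two_iff_integrable_sq_norm cont.aestronglyMeasurable).2
      (cont.norm.pow 2).integrableOn_Ioc
  have parseval := hasSum_sq_fourierCoeffOn Real.two_pi_pos memLp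
  rw [sub_zero] at parseval
  calc ∑ k ∈ t, ‖taylorCoeff f c k‖ ^ 2 * (r ^ k) ^ 2
      = ∑ k ∈ t.map Nat.castEmbedding,
          ‖fourierCoeffOn Real.two_pi_pos (fun θ ↦ f (circleMap c r θ)) k‖ ^ 2 := by
        rw [Finset.sum_map]
        refine Finset.sum_congr rfl fun k _ ↦ ?_
        rw [Nat.castEmbedding_apply, fourierCoeffOn_comp_circleMap hr hf, norm_mul, norm_pow,
          Complex.norm_of_nonneg hr.le, mul_pow, mul_comm]
    _ ≤ Real.circleAverage (fun z ↦ ‖f z‖ ^ 2) c r :=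
        sum_le_hasSum _ (fun _ _ ↦ sq_nonneg _) parseval

end TaylorCoeff

section Subordination

variable {c w z : ℂ} {r R : ℝ} {f : ℂ → ℂ}

theorem poissonKernel_nonneg (hz : z ∈ Metric.sphere c R) (hw : w ∈ Metric.ball c R) :
    0 ≤ poissonKernel c w z := by
  rw [mem_sphere_iff_norm] at hz
  rw [mem_ball_iff_norm, ← hz] at hw
  exact div_nonneg (sub_nonneg.2 (by gcongr)) (sq_nonneg _)

theorem poissonKernel_le (hz : z ∈ Metric.sphere c R) (hw : w ∈ Metric.ball c R) :
    poissonKernel c w z ≤ (R + ‖w - c‖) / (R - ‖w - c‖) := by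
  rw [poissonKernel_eq_re_herglotzRieszKernel]
  exact re_herglotzRieszKernel_le hz hw

theorem continuousOn_poissonKernel (hw : w ∈ Metric.ball c R) :
    ContinuousOn (poissonKernel c w) (Metric.sphere c R) := by
  have hR : 0 < R := Metric.pos_of_mem_ball hw
  rw [poissonKernel_eq_re_herglotzRieszKernel]
  have := continuousOn_herglotzRieszKernel_sphere hw
  rw [abs_of_pos hR] at this
  exact Complex.continuous_re.comp_continuousOn this

theorem circleAverage_poissonKernel_mul_le {u : ℂ → ℝ} (hu : ContinuousOn u (Metric.sphere c R))
    (hu0 : ∀ z ∈ Metric.sphere c R, 0 ≤ u z) (hw : w ∈ Metric.ball c R) :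
    Real.circleAverage (poissonKernel c w • u) c R ≤
      (R + ‖w - c‖) / (R - ‖w - c‖) * Real.circleAverage u c R := by
  have hR : 0 < R := Metric.pos_of_mem_ball hw
  rw [← smul_eq_mul, ← Real.circleAverage_smul]
  refine Real.circleAverage_mono ((continuousOn_poissonKernel hw).smul hu |>.circleIntegrable hR.le)
    (hu.const_smul _ |>.circleIntegrable hR.le) fun z hz ↦ ?_
  rw [abs_of_pos hR] at hz
  exact mul_le_mul_of_nonneg_right (poissonKernel_le hz hw) (hu0 z hz)

theorem norm_sq_le_circleAverage_poissonKernel (hf : DiffContOnCl ℂ f (Metric.ball c R))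
    (hw : w ∈ Metric.ball c R) :
    ‖f w‖ ^ 2 ≤ Real.circleAverage (poissonKernel c w • fun z ↦ ‖f z‖ ^ 2) c R := by
  have hR : 0 < R := Metric.pos_of_mem_ball hw
  -- The real part of `g` is at most `‖f‖ ^ 2`, with equality at `w`.
  let g : ℂ → ℂ := fun z ↦ 2 * starRingEnd ℂ (f w) * f z - (‖f w‖ ^ 2 : ℝ)
  have hg : DiffContOnCl ℂ g (Metric.ball c R) :=
    (hf.const_smul (2 * starRingEnd ℂ (f w))).sub_const _
  have hP := continuousOn_poissonKernel hw
  have hf_sphere := hf.continuousOn_ball.mono Metric.sphere_subset_closedBall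
  have hg_sphere := hg.continuousOn_ball.mono Metric.sphere_subset_closedBall
  have re_g_le (z : ℂ) : (g z).re ≤ ‖f z‖ ^ 2 := by
    have h : 0 ≤ ‖f z - f w‖ ^ 2 := sq_nonneg _
    simp only [g, ← Complex.normSq_eq_norm_sq, Complex.normSq_apply, Complex.sub_re,
      Complex.sub_im, Complex.mul_re, Complex.mul_im, Complex.conj_re, Complex.conj_im,
      Complex.ofReal_re, Complex.re_ofNat, Complex.im_ofNat] at h ⊢
    linarith
  have g_w : g w = (‖f w‖ ^ 2 : ℝ) := by
    simp only [g, mul_assoc, Complex.conj_mul', Complex.ofReal_pow]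
    ring
  calc ‖f w‖ ^ 2 = (g w).re := by
        rw [g_w, Complex.ofReal_re]
    _ = Real.circleAverage (Complex.reCLM ∘ (poissonKernel c w • g)) c R := by
        rw [Complex.reCLM.circleAverage_comp_comm ((hP.smul hg_sphere).circleIntegrable hR.le),
          hg.circleAverage_poissonKernel_smul hw, Complex.reCLM_apply]
    _ ≤ Real.circleAverage (poissonKernel c w • fun z ↦ ‖f z‖ ^ 2) c R := by
        refine Real.circleAverage_mono
          (Complex.continuous_re.comp_continuousOn (hP.smul hg_sphere) |>.circleIntegrable hR.le)
          (hP.smul (hf_sphere.norm.pow 2) |>.circleIntegrable hR.le) fun z hz ↦ ?_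
        rw [abs_of_pos hR] at hz
        simpa using mul_le_mul_of_nonneg_left (re_g_le z) (poissonKernel_nonneg hz hw)

theorem exists_differentiableOn_re_eq_circleAverage_poissonKernel {u : ℂ → ℝ}
    (hu : CircleIntegrable u 0 R) :
    ∃ H : ℂ → ℂ, DifferentiableOn ℂ H (Metric.ball 0 R) ∧ ∀ w ∈ Metric.ball 0 R,
      (H w).re = Real.circleAverage (poissonKernel 0 w • u) 0 R := by
  have hu' : CircleIntegrable (fun z ↦ (u z : ℂ)) 0 R :=
    ⟨Complex.ofRealCLM.integrable_comp hu.1, Complex.ofRealCLM.integrable_comp hu.2⟩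
  refine ⟨_, differentiableOn_circleAverage_herglotzRieszKernel_smul hu', fun w hw ↦ ?_⟩
  rw [re_circleAverage_herglotzRieszKernel_smul hu hw, poissonKernel_eq_re_herglotzRieszKernel]

theorem circleAverage_norm_sq_comp_le {φ : ℂ → ℂ} (hr : 0 < r)
    (hf : DiffContOnCl ℂ f (Metric.ball 0 R)) (hφ : DiffContOnCl ℂ φ (Metric.ball c r))
    (hmap : Set.MapsTo φ (Metric.closedBall c r) (Metric.ball 0 R)) :
    Real.circleAverage (fun z ↦ ‖f (φ z)‖ ^ 2) c r ≤
      (R + ‖φ c‖) / (R - ‖φ c‖) * Real.circleAverage (fun z ↦ ‖f z‖ ^ 2) 0 R := by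
  have hc : φ c ∈ Metric.ball 0 R := hmap (Metric.mem_closedBall_self hr.le)
  have hR : 0 < R := Metric.pos_of_mem_ball hc
  have hu : ContinuousOn (fun z ↦ ‖f z‖ ^ 2) (Metric.closedBall 0 R) :=
    hf.continuousOn_ball.norm.pow 2
  have hu_sphere := hu.mono Metric.sphere_subset_closedBall
  obtain ⟨H, hH, re_H⟩ :=
    exists_differentiableOn_re_eq_circleAverage_poissonKernel (hu_sphere.circleIntegrable hR.le)
  have hmap_sphere := hmap.mono_left Metric.sphere_subset_closedBall
  have hφ_sphere := hφ.continuousOn_ball.mono Metric.sphere_subset_closedBall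
  have hHφ_sphere : ContinuousOn (H ∘ φ) (Metric.sphere c r) :=
    hH.continuousOn.comp hφ_sphere hmap_sphere
  have hHφ : DiffContOnCl ℂ (H ∘ φ) (Metric.ball c |r|) := by
    rw [abs_of_pos hr]
    refine ⟨hH.comp hφ.differentiableOn (hmap.mono_left Metric.ball_subset_closedBall), ?_⟩
    rw [closure_ball c hr.ne']
    exact hH.continuousOn.comp hφ.continuousOn_ball hmap
  calc Real.circleAverage (fun z ↦ ‖f (φ z)‖ ^ 2) c r
      ≤ Real.circleAverage (Complex.reCLM ∘ H ∘ φ) c r := by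
        refine Real.circleAverage_mono
          ((hf.continuousOn.mono subset_closure).comp hφ_sphere hmap_sphere |>.norm.pow 2
            |>.circleIntegrable hr.le)
          (Complex.continuous_re.comp_continuousOn hHφ_sphere |>.circleIntegrable hr.le)
          fun z hz ↦ ?_
        rw [abs_of_pos hr] at hz
        have hφz := hmap (Metric.sphere_subset_closedBall hz)
        exact (norm_sq_le_circleAverage_poissonKernel hf hφz).trans_eq (re_H _ hφz).symm
    _ = (H (φ c)).re := by
        rw [Complex.reCLM.circleAverage_comp_comm (hHφ_sphere.circleIntegrable hr.le),
          hHφ.circleAverage, Complex.reCLM_apply, Function.comp_apply]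
    _ ≤ (R + ‖φ c‖) / (R - ‖φ c‖) * Real.circleAverage (fun z ↦ ‖f z‖ ^ 2) 0 R := by
        rw [re_H _ hc]
        simpa using circleAverage_poissonKernel_mul_le hu_sphere (fun _ _ ↦ sq_nonneg _) hc

end Subordination

/-- The matrix of the composition operator `C_φ` with respect to the monomials: its `n`-th column
consists of the Taylor coefficients of `φ ^ n` at `0`. -/
def compMatrix (φ : ℂ → ℂ) : Matrix ℕ ℕ ℂ :=
  Matrix.of fun k n ↦ taylorCoeff (fun z ↦ φ z ^ n) 0 k

theorem sum_norm_sq_compMatrix_mul_le {φ : ℂ → ℂ} {r : ℝ} (hr : 0 < r)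
    (hφ : DiffContOnCl ℂ φ (Metric.ball 0 r))
    (hmap : Set.MapsTo φ (Metric.closedBall 0 r) (Metric.ball 0 1)) (t s : Finset ℕ) (x : ℕ → ℂ) :
    ∑ k ∈ t, ‖∑ n ∈ s, compMatrix φ k n * x n‖ ^ 2 * (r ^ k) ^ 2 ≤
      (1 + ‖φ 0‖) / (1 - ‖φ 0‖) * ∑ n ∈ s, ‖x n‖ ^ 2 := by
  let p : Polynomial ℂ := ∑ n ∈ s, Polynomial.monomial n (x n)
  have p_eval (z : ℂ) : p.eval z = ∑ n ∈ s, x n * z ^ n := by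
    simp [p, Polynomial.eval_finsetSum]
  have p_coeff (n : ℕ) : p.coeff n = if n ∈ s then x n else 0 := by
    simp [p, Polynomial.coeff_monomial]
  have sum_coeff : ∑ n ∈ p.support, ‖p.coeff n‖ ^ 2 = ∑ n ∈ s, ‖x n‖ ^ 2 := by
    rw [Finset.sum_subset (s₂ := s) (fun n hn ↦ ?_) (by simp +contextual)]
    · exact Finset.sum_congr rfl fun n hn ↦ by rw [p_coeff, if_pos hn]
    · by_contra hns
      exact Polynomial.mem_support_iff.1 hn (by rw [p_coeff, if_neg hns])
  have hφ0 : AnalyticAt ℂ φ 0 := hφ.differentiableOn.analyticAt (Metric.ball_mem_nhds 0 hr)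
  have taylorCoeff_comp (k : ℕ) :
      taylorCoeff (fun z ↦ p.eval (φ z)) 0 k = ∑ n ∈ s, compMatrix φ k n * x n := by
    simp only [p_eval]
    exact taylorCoeff_fun_sum s x (fun n _ ↦ hφ0.fun_pow n) k
  have hpφ : DiffContOnCl ℂ (fun z ↦ p.eval (φ z)) (Metric.ball 0 r) :=
    p.differentiable.comp_diffContOnCl hφ
  calc ∑ k ∈ t, ‖∑ n ∈ s, compMatrix φ k n * x n‖ ^ 2 * (r ^ k) ^ 2
      ≤ Real.circleAverage (fun z ↦ ‖p.eval (φ z)‖ ^ 2) 0 r := by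
        simpa only [taylorCoeff_comp] using sum_norm_sq_taylorCoeff_le hr hpφ t
    _ ≤ (1 + ‖φ 0‖) / (1 - ‖φ 0‖) * Real.circleAverage (fun z ↦ ‖p.eval z‖ ^ 2) 0 1 :=
        circleAverage_norm_sq_comp_le hr p.differentiable.diffContOnCl hφ hmap
    _ = (1 + ‖φ 0‖) / (1 - ‖φ 0‖) * ∑ n ∈ s, ‖x n‖ ^ 2 := by
        rw [← p.sum_sq_norm_coeff_eq_circleAverage, sum_coeff]

theorem isL2BoundedBy_compMatrix {φ : ℂ → ℂ} (hφ : DifferentiableOn ℂ φ (Metric.ball 0 1))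
    (hmap : Set.MapsTo φ (Metric.ball 0 1) (Metric.ball 0 1)) :
    IsL2BoundedBy (compMatrix φ) ((1 + ‖φ 0‖) / (1 - ‖φ 0‖)) := by
  have h0 : ‖φ 0‖ < 1 := by simpa using hmap (Metric.mem_ball_self one_pos)
  refine ⟨div_nonneg (by positivity) (by linarith), fun t s x ↦ ?_⟩
  have cont : Continuous fun r : ℝ ↦
      ∑ k ∈ t, ‖∑ n ∈ s, compMatrix φ k n * x n‖ ^ 2 * (r ^ k) ^ 2 := by fun_prop
  have lim := (cont.tendsto 1).mono_left (nhdsWithin_le_nhds (s := Set.Iio 1))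
  simp only [one_pow, mul_one] at lim
  refine le_of_tendsto lim ?_
  filter_upwards [Ioo_mem_nhdsLT (zero_lt_one' ℝ)] with r hr
  have hsub := Metric.closedBall_subset_ball (x := (0 : ℂ)) hr.2
  exact sum_norm_sq_compMatrix_mul_le hr.1 (hφ.diffContOnCl_ball hsub) (hmap.mono_left hsub) t s x

section Decay

variable {φ : ℂ → ℂ}

theorem exists_norm_compMatrix_le_pow {r : ℝ} (hr : 0 < r)
    (hφ : DiffContOnCl ℂ φ (Metric.ball 0 r)) :
    ∃ z ∈ Metric.sphere (0 : ℂ) r, ∀ k n, ‖compMatrix φ k n‖ ≤ ‖φ z‖ ^ n * r⁻¹ ^ k := by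
  obtain ⟨z, hz, hmax⟩ := (isCompact_sphere (0 : ℂ) r).exists_isMaxOn
    (NormedSpace.sphere_nonempty.2 hr.le)
    (hφ.continuousOn_ball.mono Metric.sphere_subset_closedBall).norm
  refine ⟨z, hz, fun k n ↦ norm_taylorCoeff_le hr
    ((differentiable_pow n).comp_diffContOnCl hφ) (fun w hw ↦ ?_) k⟩
  change ‖φ w ^ n‖ ≤ _
  rw [norm_pow]
  exact pow_le_pow_left₀ (norm_nonneg _) (hmax hw) n

theorem eventually_pow_mul_pow_le {X τ ρ : ℝ} (hX : 0 ≤ X) (hτ : 0 ≤ τ) (hρ : 0 < ρ) (hρ1 : ρ < 1)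
    (hτρ : τ ≤ ρ ^ 2) : ∀ᶠ M : ℕ in atTop, ∀ n k, M * n ≤ k → X ^ n * τ ^ k ≤ ρ ^ (n + k) := by
  have lim : Tendsto (fun M : ℕ ↦ X * ρ ^ M) atTop (𝓝 0) := by
    simpa using (tendsto_pow_atTop_nhds_zero_of_lt_one hρ.le hρ1).const_mul X
  filter_upwards [lim.eventually_le_const hρ] with M hM n k hnk
  calc X ^ n * τ ^ k ≤ X ^ n * (ρ ^ 2) ^ k := by gcongr
    _ = X ^ n * ρ ^ k * ρ ^ k := by ring
    _ ≤ X ^ n * ρ ^ (M * n) * ρ ^ k := by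
        gcongr X ^ n * ?_ * ρ ^ k
        exact pow_le_pow_of_le_one hρ.le hρ1.le hnk
    _ = (X * ρ ^ M) ^ n * ρ ^ k := by rw [mul_pow, ← pow_mul]
    _ ≤ ρ ^ n * ρ ^ k := by gcongr
    _ = ρ ^ (n + k) := (pow_add _ _ _).symm

theorem AnalyticOnClosedDisk.exists_differentiableOn_closedBall (hφ : AnalyticOnClosedDisk φ) :
    ∃ R > 1, DifferentiableOn ℂ φ (Metric.closedBall 0 R) := by
  obtain ⟨U, hU, hsub, hφU⟩ := hφ
  obtain ⟨δ, hδ, hδU⟩ := (isCompact_closedBall (0 : ℂ) 1).exists_cthickening_subset_open hU hsub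
  rw [cthickening_closedBall hδ.le zero_le_one] at hδU
  exact ⟨δ + 1, by linarith, hφU.differentiableOn.mono hδU⟩

theorem AnalyticOnClosedDisk.differentiableOn_ball (hφ : AnalyticOnClosedDisk φ) :
    DifferentiableOn ℂ φ (Metric.ball 0 1) := by
  obtain ⟨R, hR, hφR⟩ := hφ.exists_differentiableOn_closedBall
  exact hφR.mono (Metric.ball_subset_closedBall.trans (Metric.closedBall_subset_closedBall hR.le))

theorem AnalyticOnClosedDisk.exists_norm_compMatrix_le_pow_add (hφ : AnalyticOnClosedDisk φ)
    (hmap : Set.MapsTo φ (Metric.ball 0 1) (Metric.ball 0 1)) :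
    ∃ ρ : ℝ, 0 < ρ ∧ ρ < 1 ∧ ∀ᶠ M : ℕ in atTop, ∀ k n, M * n ≤ k ∨ M * k ≤ n →
      ‖compMatrix φ k n‖ ≤ ρ ^ (n + k) := by
  obtain ⟨R, hR, hφR⟩ := hφ.exists_differentiableOn_closedBall
  have hR0 : 0 < R := by linarith
  have hsub : Metric.closedBall (0 : ℂ) (1 / 2) ⊆ Metric.closedBall 0 R :=
    Metric.closedBall_subset_closedBall (by linarith)
  obtain ⟨z, -, hz⟩ := exists_norm_compMatrix_le_pow hR0 (hφR.diffContOnCl_ball subset_rfl)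
  obtain ⟨z', hz', hz'_le⟩ :=
    exists_norm_compMatrix_le_pow one_half_pos (hφR.diffContOnCl_ball hsub)
  have hφz' : ‖φ z'‖ < 1 := by
    rw [mem_sphere_zero_iff_norm] at hz'
    simpa using hmap (mem_ball_zero_iff.2 (hz'.trans_lt one_half_lt_one))
  obtain ⟨τ, hRτ, hφτ, hτ1⟩ : ∃ τ, R⁻¹ ≤ τ ∧ ‖φ z'‖ ≤ τ ∧ τ < 1 :=
    ⟨_, le_max_left _ _, le_max_right _ _, max_lt (inv_lt_one_of_one_lt₀ hR) hφz'⟩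
  have hτ0 : 0 ≤ τ := (norm_nonneg _).trans hφτ
  have hτρ : τ ≤ ((1 + τ) / 2) ^ 2 := by nlinarith [sq_nonneg (1 - τ)]
  refine ⟨(1 + τ) / 2, by linarith, by linarith, ?_⟩
  filter_upwards [
    eventually_pow_mul_pow_le (norm_nonneg (φ z)) (inv_nonneg.2 hR0.le) (by linarith) (by linarith)
      (hRτ.trans hτρ),
    eventually_pow_mul_pow_le (X := (1 / 2 : ℝ)⁻¹) (by norm_num) (norm_nonneg (φ z')) (by linarith)
      (by linarith) (hφτ.trans hτρ)] with M hM hM' k n hkn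
  obtain hnk | hkn := hkn
  · exact (hz k n).trans (hM n k hnk)
  · rw [add_comm n k]
    exact (hz'_le k n).trans ((mul_comm _ _).trans_le (hM' k n hkn))

end Decay

/-- `β` is O-regularly varying (Avakumović, Karamata): positive, with values that are comparable
at indices that are comparable. Indices are shifted by one so that `0` is comparable to `1`. -/
structure IsORegular (β : ℕ → ℝ) : Prop where
  pos : ∀ k, 0 < β k
  exists_le_mul : ∀ M : ℕ, ∃ D : ℝ, ∀ m n, m + 1 ≤ M * (n + 1) → n + 1 ≤ M * (m + 1) →
    β m ≤ D * β n

namespace IsORegular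

variable {β : ℕ → ℝ}

theorem inv (hβ : IsORegular β) : IsORegular β⁻¹ where
  pos k := inv_pos.2 (hβ.pos k)
  exists_le_mul M := by
    obtain ⟨D, hD⟩ := hβ.exists_le_mul M
    refine ⟨D, fun m n hmn hnm ↦ ?_⟩
    rw [Pi.inv_apply, Pi.inv_apply, ← div_eq_mul_inv, le_div_iff₀ (hβ.pos n),
      inv_mul_le_iff₀ (hβ.pos m), mul_comm]
    exact hD n m hnm hmn

theorem exists_isBigO_pow (hβ : IsORegular β) : ∃ p : ℕ, β =O[atTop] fun k ↦ (k : ℝ) ^ p := by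
  obtain ⟨D, hD⟩ := hβ.exists_le_mul 2
  obtain ⟨p, hp⟩ := pow_unbounded_of_one_lt D one_lt_two
  have bound (k : ℕ) (hk : 1 ≤ k) : β k ≤ β 1 * (k : ℝ) ^ p := by
    induction k using Nat.strong_induction_on with
    | _ k ih =>
      obtain rfl | hk2 := hk.eq_or_lt
      · simp
      have two_mul_half_le : 2 * ((k / 2 : ℕ) : ℝ) ≤ k := mod_cast Nat.mul_div_le k 2
      have hβ1 := hβ.pos 1
      calc β k ≤ D * β (k / 2) := hD _ _ (by omega) (by omega)
        _ ≤ 2 ^ p * (β 1 * ((k / 2 : ℕ) : ℝ) ^ p) := by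
          gcongr
          exacts [(hβ.pos _).le, ih _ (by omega) (by omega)]
        _ = β 1 * (2 * ((k / 2 : ℕ) : ℝ)) ^ p := by ring
        _ ≤ β 1 * (k : ℝ) ^ p := by gcongr
  refine ⟨p, Asymptotics.IsBigO.of_bound (β 1) ?_⟩
  filter_upwards [eventually_ge_atTop 1] with k hk
  rw [Real.norm_of_nonneg (hβ.pos k).le, Real.norm_of_nonneg (by positivity)]
  exact bound k hk

theorem summable_mul_pow_sq (hβ : IsORegular β) {ρ : ℝ} (hρ : 0 ≤ ρ) (hρ1 : ρ < 1) :
    Summable fun k ↦ (β k * ρ ^ k) ^ 2 := by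
  obtain ⟨p, hp⟩ := hβ.exists_isBigO_pow
  refine summable_of_isBigO_nat (summable_pow_mul_geometric_of_norm_lt_one (r := ρ ^ 2) (2 * p) ?_)
    (((hp.mul (Asymptotics.isBigO_refl (fun k ↦ ρ ^ k) atTop)).pow 2).congr_right fun k ↦ by ring)
  rw [Real.norm_of_nonneg (by positivity)]
  exact pow_lt_one₀ hρ hρ1 two_ne_zero

end IsORegular

theorem abs_log_le_mul_abs_sub_one {x B : ℝ} (hx : 0 < x) (hB : 1 ≤ B) (hxB : x⁻¹ ≤ B) :
    |Real.log x| ≤ B * |x - 1| := by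
  rw [abs_le]
  constructor
  · calc -(B * |x - 1|) ≤ -(x⁻¹ * |x - 1|) := by gcongr
      _ ≤ x⁻¹ * (x - 1) := by
        rw [← mul_neg]
        gcongr
        exact neg_abs_le _
      _ = 1 - x⁻¹ := by field_simp
      _ ≤ Real.log x := Real.one_sub_inv_le_log_of_pos hx
  · calc Real.log x ≤ x - 1 := Real.log_le_sub_one_of_pos hx
      _ ≤ |x - 1| := le_abs_self _
      _ ≤ B * |x - 1| := le_mul_of_one_le_left (abs_nonneg _) hB

namespace PolyGrowth

variable {w : ℕ → ℝ}

theorem exists_abs_log_le (hw : PolyGrowth w) :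
    ∃ C, 0 ≤ C ∧ ∀ j : ℕ, 1 ≤ j → |Real.log (w j)| ≤ C / (j + 1) := by
  obtain ⟨hpos, hlim, K, hK⟩ := hw
  obtain ⟨B, hB⟩ := (hlim.inv₀ one_ne_zero).bddAbove_range
  have hK0 : 0 ≤ K := le_trans (by positivity) (hK 1 le_rfl)
  refine ⟨max B 1 * K, by positivity, fun j hj ↦ ?_⟩
  calc |Real.log (w j)| ≤ max B 1 * |w j - 1| :=
        abs_log_le_mul_abs_sub_one (hpos j hj) (le_max_right _ _)
          ((hB ⟨j, rfl⟩).trans (le_max_left _ _))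
    _ ≤ max B 1 * (K / (j + 1)) := by
        gcongr
        rw [le_div_iff₀' (by positivity)]
        exact hK j hj
    _ = max B 1 * K / (j + 1) := (mul_div_assoc _ _ _).symm

theorem betaSeq_pos (hw : PolyGrowth w) (k : ℕ) : 0 < betaSeq w k :=
  Finset.prod_pos fun j hj ↦ hw.1 j (Finset.mem_Icc.1 hj).1

theorem log_betaSeq (hw : PolyGrowth w) (k : ℕ) :
    Real.log (betaSeq w k) = ∑ j ∈ Finset.Ioc 0 k, Real.log (w j) :=
  Real.log_prod fun j hj ↦ (hw.1 j (Finset.mem_Icc.1 hj).1).ne'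

theorem exists_abs_log_betaSeq_sub_le (hw : PolyGrowth w) :
    ∃ C, 0 ≤ C ∧ ∀ m n : ℕ, m ≤ n →
      |Real.log (betaSeq w n) - Real.log (betaSeq w m)| ≤ C * ((n + 1) / (m + 1)) := by
  obtain ⟨C, hC, hlog⟩ := hw.exists_abs_log_le
  refine ⟨C, hC, fun m n hmn ↦ ?_⟩
  have hsum : Real.log (betaSeq w n) - Real.log (betaSeq w m)
      = ∑ j ∈ Finset.Ioc m n, Real.log (w j) := by
    rw [hw.log_betaSeq, hw.log_betaSeq, sub_eq_iff_eq_add',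
      Finset.sum_Ioc_consecutive _ m.zero_le hmn]
  calc |Real.log (betaSeq w n) - Real.log (betaSeq w m)|
      ≤ ∑ j ∈ Finset.Ioc m n, |Real.log (w j)| := hsum ▸ Finset.abs_sum_le_sum_abs _ _
    _ ≤ ∑ j ∈ Finset.Ioc m n, C / (m + 1) := by
        refine Finset.sum_le_sum fun j hj ↦ ?_
        have hmj := (Finset.mem_Ioc.1 hj).1
        refine (hlog j (by omega)).trans ?_
        gcongr
    _ = C * ((n - m) / (m + 1)) := by
        rw [Finset.sum_const, Nat.card_Ioc, nsmul_eq_mul, Nat.cast_sub hmn]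
        ring
    _ ≤ C * ((n + 1) / (m + 1)) := by
        gcongr
        linarith [m.cast_nonneg (α := ℝ)]

theorem isORegular_betaSeq (hw : PolyGrowth w) : IsORegular (betaSeq w) where
  pos := hw.betaSeq_pos
  exists_le_mul M := by
    obtain ⟨C, hC, hdiff⟩ := hw.exists_abs_log_betaSeq_sub_le
    have cmp {m n : ℕ} (hmn : m ≤ n) (hnM : n + 1 ≤ M * (m + 1)) :
        |Real.log (betaSeq w n) - Real.log (betaSeq w m)| ≤ C * M := by
      refine (hdiff m n hmn).trans ?_
      gcongr
      rw [div_le_iff₀ (by positivity)]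
      exact_mod_cast hnM
    refine ⟨Real.exp (C * M), fun m n hm hn ↦ ?_⟩
    have h : Real.log (betaSeq w m) - Real.log (betaSeq w n) ≤ C * M := by
      obtain hmn | hnm := le_total m n
      · linarith [neg_le_of_abs_le (cmp hmn hn)]
      · exact le_of_abs_le (cmp hnm hm)
    rw [← Real.log_le_log_iff (hw.betaSeq_pos m) (mul_pos (Real.exp_pos _) (hw.betaSeq_pos n)),
      Real.log_mul (Real.exp_ne_zero _) (hw.betaSeq_pos n).ne', Real.log_exp]
    linarith

end PolyGrowth

section Assembly

variable {b m n : ℕ}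

theorem mul_le_of_log_add_one_lt_log (hb : 1 < b) (h : Nat.log b m + 1 < Nat.log b n) :
    b * m ≤ n := by
  have hn : n ≠ 0 := by
    rintro rfl
    simp at h
  calc b * m ≤ b * b ^ (Nat.log b m + 1) := by
        gcongr
        exact (Nat.lt_pow_succ_log_self hb m).le
    _ = b ^ (Nat.log b m + 2) := (pow_succ' _ _).symm
    _ ≤ b ^ Nat.log b n := Nat.pow_le_pow_right hb.le h
    _ ≤ n := Nat.pow_log_le_self b hn

theorem add_one_le_of_log_le_log_add_one (hb : 1 < b) (h : Nat.log b n ≤ Nat.log b m + 1) :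
    n + 1 ≤ b ^ 2 * (m + 1) :=
  calc n + 1 ≤ b ^ (Nat.log b n + 1) := Nat.lt_pow_succ_log_self hb n
    _ ≤ b ^ (2 + Nat.log b m) := Nat.pow_le_pow_right hb.le (by omega)
    _ = b ^ 2 * b ^ Nat.log b m := pow_add _ _ _
    _ ≤ b ^ 2 * (m + 1) := by
      gcongr
      exact Nat.pow_log_le_add_one b m

theorem IsORegular.exists_div_le_of_log_le {β : ℕ → ℝ} (hβ : IsORegular β) (hb : 1 < b) :
    ∃ D : ℝ, ∀ m n, Nat.log b m ≤ Nat.log b n + 1 → Nat.log b n ≤ Nat.log b m + 1 →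
      β m / β n ≤ D := by
  obtain ⟨D, hD⟩ := hβ.exists_le_mul (b ^ 2)
  refine ⟨D, fun m n hmn hnm ↦ (div_le_iff₀ (hβ.pos n)).2 ?_⟩
  exact hD m n (add_one_le_of_log_le_log_add_one hb hmn) (add_one_le_of_log_le_log_add_one hb hnm)

theorem IsORegular.exists_isL2BoundedBy_div_mul {𝕜 : Type*} [RCLike 𝕜] {A : Matrix ℕ ℕ 𝕜}
    {C ρ : ℝ} {β : ℕ → ℝ} (hβ : IsORegular β) (hA : IsL2BoundedBy A C) (hρ : 0 ≤ ρ) (hρ1 : ρ < 1)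
    (hb : 1 < b)
    (hdecay : ∀ k n, b * n ≤ k ∨ b * k ≤ n → ‖A k n‖ ≤ ρ ^ (n + k)) :
    ∃ C', IsL2BoundedBy (Matrix.of fun k n ↦ (β k / β n : 𝕜) * A k n) C' := by
  obtain ⟨D, hD⟩ := hβ.exists_div_le_of_log_le hb
  let W : Matrix ℕ ℕ 𝕜 := Matrix.of fun k n ↦ (β k / β n : 𝕜) * A k n
  let N (k : ℕ) : Finset ℕ := Finset.Icc (Nat.log b k - 1) (Nat.log b k + 1)
  let near : Matrix ℕ ℕ 𝕜 := Matrix.of fun k n ↦ if Nat.log b n ∈ N k then W k n else 0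
  have near_bdd : IsL2BoundedBy near (3 * (D ^ 2 * C)) := by
    simp only [near, W, div_eq_mul_inv]
    refine hA.weighted_blockBanded (m := 3) (fun k ↦ ?_) fun k n hkn ↦ ?_
    · rw [Nat.card_Icc]
      omega
    · have := Finset.mem_Icc.1 hkn
      rw [norm_inv, RCLike.norm_of_nonneg (hβ.pos k).le, RCLike.norm_of_nonneg (hβ.pos n).le]
      exact hD k n (by omega) (by omega)
  have far_le (k n : ℕ) : ‖(W - near) k n‖ ≤ (β k * ρ ^ k) * (β⁻¹ n * ρ ^ n) := by
    have hβk := hβ.pos k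
    have hβn := hβ.pos n
    by_cases hkn : Nat.log b n ∈ N k
    · simp only [Matrix.sub_apply, near, Matrix.of_apply, if_pos hkn, sub_self, norm_zero,
        Pi.inv_apply]
      positivity
    · have hcone : b * n ≤ k ∨ b * k ≤ n := by
        rw [Finset.mem_Icc] at hkn
        exact Or.imp (mul_le_of_log_add_one_lt_log hb) (mul_le_of_log_add_one_lt_log hb) (by omega)
      calc ‖(W - near) k n‖ = β k / β n * ‖A k n‖ := by
            simp [W, near, hkn, abs_of_pos, hβk, hβn]
        _ ≤ β k / β n * ρ ^ (n + k) := by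
            gcongr
            exact hdecay k n hcone
        _ = (β k * ρ ^ k) * (β⁻¹ n * ρ ^ n) := by
            rw [pow_add, Pi.inv_apply]
            ring
  have far_bdd := IsL2BoundedBy.of_norm_le_mul (hβ.summable_mul_pow_sq hρ hρ1)
    (hβ.inv.summable_mul_pow_sq hρ hρ1) far_le
  exact ⟨_, add_sub_cancel near W ▸ near_bdd.add far_bdd⟩

theorem IsORegular.exists_isL2BoundedBy_compMatrix {β : ℕ → ℝ} (hβ : IsORegular β) {φ : ℂ → ℂ}
    (hφ : AnalyticOnClosedDisk φ) (hmap : Set.MapsTo φ (Metric.ball 0 1) (Metric.ball 0 1)) :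
    ∃ C, IsL2BoundedBy (Matrix.of fun k n ↦ (β k / β n : ℂ) * compMatrix φ k n) C := by
  obtain ⟨ρ, hρ, hρ1, hdecay⟩ := hφ.exists_norm_compMatrix_le_pow_add hmap
  obtain ⟨b, hb_decay, hb⟩ := (hdecay.and (eventually_gt_atTop 1)).exists
  exact hβ.exists_isL2BoundedBy_div_mul (isL2BoundedBy_compMatrix hφ.differentiableOn_ball hmap)
    hρ.le hρ1 hb hb_decay

end Assembly

section CompositionOperator

variable {β : ℕ → ℝ}

theorem IsORegular.exists_clm_eq_repFun (hβ : IsORegular β) {z : ℂ} (hz : z ∈ unitDisk) :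
    ∃ e : H2 →L[ℂ] ℂ, ∀ a, e a = repFun β a z := by
  rw [unitDisk, mem_ball_zero_iff] at hz
  have hmem : Memℓp (fun k ↦ star (z ^ k / (β k : ℂ))) 2 := by
    refine memℓp_gen ((hβ.inv.summable_mul_pow_sq (norm_nonneg z) hz).congr fun k ↦ ?_)
    simp [abs_of_pos (hβ.pos k), div_eq_inv_mul]
  refine ⟨innerSL ℂ (⟨_, hmem⟩ : H2), fun a ↦ ?_⟩
  rw [innerSL_apply_apply, lp.inner_eq_tsum, repFun]
  refine tsum_congr fun k ↦ ?_
  simp only [RCLike.inner_apply, RCLike.star_def, Complex.conj_conj]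
  ring

theorem repFun_single (n : ℕ) (z : ℂ) : repFun β (lp.single 2 n 1) z = (β n : ℂ)⁻¹ * z ^ n := by
  rw [repFun, tsum_eq_single n]
  · simp
  · intro m hmn
    simp [lp.single_apply, hmn]

theorem IsORegular.repComp (hβ : IsORegular β) {φ : ℂ → ℂ}
    (hφ : DifferentiableOn ℂ φ unitDisk) (hmap : Set.MapsTo φ unitDisk unitDisk) {T : H2 →L[ℂ] H2}
    (hT : ∀ n k, T (lp.single 2 n 1) k = (β k / β n : ℂ) * compMatrix φ k n) :
    RepComp β φ T := by
  intro a z hz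
  obtain ⟨e, he⟩ := hβ.exists_clm_eq_repFun hz
  obtain ⟨e', he'⟩ := hβ.exists_clm_eq_repFun (hmap hz)
  suffices e ∘L T = e' by rw [← he, ← he', ← this, ContinuousLinearMap.comp_apply]
  refine lp.ext_continuousLinearMap ENNReal.ofNat_ne_top fun n ↦ ContinuousLinearMap.ext_ring ?_
  change e (T (lp.single 2 n 1)) = e' (lp.single 2 n 1)
  rw [he, he', repFun_single]
  have taylor := ((hasSum_taylorCoeff (hφ.fun_pow n) hz).mul_left (β n : ℂ)⁻¹).tsum_eq
  rw [repFun, ← taylor]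
  refine tsum_congr fun k ↦ ?_
  have hβk : (β k : ℂ) ≠ 0 := mod_cast (hβ.pos k).ne'
  rw [hT, compMatrix, Matrix.of_apply, sub_zero]
  field_simp

end CompositionOperator

theorem statement2_general {β : ℕ → ℝ} (hβ : IsORegular β) {ψ : ℂ → ℂ}
    (hψ : AnalyticOnClosedDisk ψ) (hmap : Set.MapsTo ψ unitDisk unitDisk) :
    ∃ T : H2 →L[ℂ] H2, RepComp β ψ T := by
  obtain ⟨C, hC⟩ := hβ.exists_isL2BoundedBy_compMatrix hψ hmap
  obtain ⟨T, hT⟩ := hC.exists_clm_single_apply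
  exact ⟨T, hβ.repComp hψ.differentiableOn_ball hmap hT⟩

/-- On a weighted Hardy space `H²_β` of polynomial growth, if `ψ` is
analytic on an open neighbourhood of the closed unit disk and `ψ(𝔻) ⊆ 𝔻`, then the
composition operator `C_ψ` is bounded on `H²_β`. -/
theorem statement2 (w : ℕ → ℝ) (hw : PolyGrowth w) (ψ : ℂ → ℂ)
    (hψ : AnalyticOnClosedDisk ψ) (hmap : Set.MapsTo ψ unitDisk unitDisk) :
    ∃ T : H2 →L[ℂ] H2, RepComp (betaSeq w) ψ T :=
  statement2_general hw.isORegular_betaSeq hψ hmap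
end
end

section
/- Let H²_β be a weighted Hardy space of polynomial growth. Then for every finite Blaschke product B with B(0) = 0, the composition operator C_B is bounded on H²_β. -/
noncomputable section

open Complex Filter Topology

/-!
Let `ψ` be analytic across the closed disk, mapping `𝔻` into `𝔻`, with `ψ 0 = 0`; every finite
Blaschke product fixing `0` is such a map. Then `f ∘ ψ` is a substitution of formal power series
whose `n`-th coefficient depends only on the coefficients of `f` up to order `n`, so the bound on
`C_ψ` can be proved on jets, uniformly in their length.

If the weight `β` is antitone, `C_ψ` is a contraction: for `β = 1` this is Littlewood subordination
(write `f = f 0 + z g`, so that `f ∘ ψ = f 0 + ψ · (g ∘ ψ)`, and use that multiplication by `ψ` is a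
contraction of `H²`), and the general case follows by Abel summation. If `β n / (n + 1) ^ (s + 1)`
is antitone, differentiate: the norm of `f` is that of `f 0` together with the norm of the
derivative of `f` in a weight of the same kind with exponent `s`, the chain rule reads
`(f ∘ ψ)′ = ψ′ · (f′ ∘ ψ)`, and `ψ′` is a multiplier because its coefficients decay geometrically.
Polynomial growth makes `β n / (n + 1) ^ s` antitone for large `s`, by the Bernoulli inequality.
-/

open PowerSeries

section Jets

variable {𝕜 : Type*} [RCLike 𝕜]

/-- The vector `(β i · f_i)_{i < N}` of the first `N` weighted coefficients of `f`, in the Euclidean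
norm. As `N → ∞` its norm increases to the `H²_β`-norm of `f`; truncating makes every formal power
series admissible. -/
def weightedJet (β : ℕ → ℝ) (N : ℕ) : 𝕜⟦X⟧ →ₗ[𝕜] EuclideanSpace 𝕜 (Fin N) where
  toFun f := WithLp.toLp 2 fun i => (β i : 𝕜) * coeff i f
  map_add' f g := by ext i; simp [mul_add]
  map_smul' c f := by ext i; simp [mul_left_comm]

theorem norm_sq_weightedJet (β : ℕ → ℝ) (N : ℕ) (f : 𝕜⟦X⟧) :
    ‖weightedJet β N f‖ ^ 2 = ∑ i ∈ Finset.range N, β i ^ 2 * ‖coeff i f‖ ^ 2 := by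
  rw [EuclideanSpace.norm_sq_eq, ← Fin.sum_univ_eq_sum_range fun i => β i ^ 2 * ‖coeff i f‖ ^ 2]
  simp [weightedJet, mul_pow]

theorem norm_sq_weightedJet_succ (β : ℕ → ℝ) (N : ℕ) (f : 𝕜⟦X⟧) :
    ‖weightedJet β (N + 1) f‖ ^ 2 =
      (β 0 * ‖constantCoeff f‖) ^ 2 +
        ∑ i ∈ Finset.range N, (β (i + 1) * ‖coeff (i + 1) f‖) ^ 2 := by
  simp only [norm_sq_weightedJet, ← mul_pow, Finset.sum_range_succ',
    coeff_zero_eq_constantCoeff_apply, add_comm]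

theorem norm_sq_weightedJet_succ_add_const (β : ℕ → ℝ) (N : ℕ) {f : 𝕜⟦X⟧}
    (hf : constantCoeff f = 0) (c : 𝕜) :
    ‖weightedJet β (N + 1) (f + C c)‖ ^ 2 =
      (β 0 * ‖c‖) ^ 2 + ‖weightedJet β (N + 1) f‖ ^ 2 := by
  rw [norm_sq_weightedJet_succ, norm_sq_weightedJet_succ]
  simp [hf]

theorem weightedJet_eq_of_X_pow_dvd_sub (β : ℕ → ℝ) {N : ℕ} {f g : 𝕜⟦X⟧}
    (h : X ^ N ∣ f - g) : weightedJet β N f = weightedJet β N g := by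
  ext i
  have hi := X_pow_dvd_iff.1 h i i.isLt
  rw [map_sub, sub_eq_zero] at hi
  simp [weightedJet, hi]

theorem X_pow_dvd_sub_trunc {R : Type*} [CommRing R] (N : ℕ) (f : R⟦X⟧) :
    X ^ N ∣ f - (trunc N f : R⟦X⟧) :=
  ⟨_, sub_eq_of_eq_add (eq_X_pow_mul_shift_add_trunc N f)⟩

theorem norm_weightedJet_X_pow_mul_le {β : ℕ → ℝ} (hβ : ∀ n, 0 ≤ β n) {k : ℕ} {C : ℝ}
    (hC : 0 ≤ C) (hβC : ∀ n, β (n + k) ≤ C * β n) (N : ℕ) (f : 𝕜⟦X⟧) :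
    ‖weightedJet β N (X ^ k * f)‖ ≤ C * ‖weightedJet β N f‖ := by
  refine le_of_sq_le_sq ?_ (by positivity)
  rw [mul_pow, norm_sq_weightedJet, norm_sq_weightedJet]
  calc ∑ i ∈ Finset.range N, β i ^ 2 * ‖coeff i (X ^ k * f)‖ ^ 2
      ≤ ∑ i ∈ Finset.range (k + N), β i ^ 2 * ‖coeff i (X ^ k * f)‖ ^ 2 :=
        Finset.sum_le_sum_of_subset_of_nonneg (Finset.range_mono (Nat.le_add_left N k))
          fun _ _ _ => by positivity
    _ = ∑ i ∈ Finset.range N, β (i + k) ^ 2 * ‖coeff i f‖ ^ 2 := by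
        rw [Finset.sum_range_add, Finset.sum_eq_zero, zero_add]
        · simp only [add_comm k, coeff_X_pow_mul]
        · intro i hi
          simp [coeff_X_pow_mul', (Finset.mem_range.1 hi).not_ge]
    _ ≤ ∑ i ∈ Finset.range N, (C * β i) ^ 2 * ‖coeff i f‖ ^ 2 := by
        gcongr with i
        exacts [hβ _, hβC i]
    _ = C ^ 2 * ∑ i ∈ Finset.range N, β i ^ 2 * ‖coeff i f‖ ^ 2 := by
        simp only [mul_pow, mul_assoc, Finset.mul_sum]

theorem weightedJet_mul_eq_sum (β : ℕ → ℝ) (N : ℕ) (b f : 𝕜⟦X⟧) :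
    weightedJet β N (b * f) =
      ∑ k ∈ Finset.range N, coeff k b • weightedJet β N (X ^ k * f) := by
  have hdvd : X ^ N ∣ b * f - (trunc N b : 𝕜⟦X⟧) * f := by
    rw [← sub_mul]
    exact (X_pow_dvd_sub_trunc N b).mul_right f
  have htrunc : (trunc N b : 𝕜⟦X⟧) = ∑ k ∈ Finset.range N, coeff k b • X ^ k := by
    ext i
    simp [coeff_trunc, coeff_X_pow]
  rw [weightedJet_eq_of_X_pow_dvd_sub β hdvd, htrunc, Finset.sum_mul, map_sum]
  simp only [smul_mul_assoc, map_smul]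

theorem norm_weightedJet_mul_le_tsum {β C : ℕ → ℝ} (hβ : ∀ n, 0 ≤ β n) (hC : ∀ k, 0 ≤ C k)
    (hβC : ∀ k n, β (n + k) ≤ C k * β n) {b : 𝕜⟦X⟧}
    (hb : Summable fun k => C k * ‖coeff k b‖) (N : ℕ) (f : 𝕜⟦X⟧) :
    ‖weightedJet β N (b * f)‖ ≤ (∑' k, C k * ‖coeff k b‖) * ‖weightedJet β N f‖ := by
  rw [weightedJet_mul_eq_sum]
  calc ‖∑ k ∈ Finset.range N, coeff k b • weightedJet β N (X ^ k * f)‖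
      ≤ ∑ k ∈ Finset.range N, C k * ‖coeff k b‖ * ‖weightedJet β N f‖ := by
        refine norm_sum_le_of_le _ fun k _ => ?_
        rw [norm_smul, mul_comm (C k), mul_assoc]
        gcongr
        exact norm_weightedJet_X_pow_mul_le hβ (hC k) (hβC k) N f
    _ ≤ (∑' k, C k * ‖coeff k b‖) * ‖weightedJet β N f‖ := by
        rw [← Finset.sum_mul]
        gcongr
        exact hb.sum_le_tsum _ fun k _ => mul_nonneg (hC k) (norm_nonneg _)

end Jets

section Evaluation

variable {𝕜 : Type*} [NormedField 𝕜]

/-- The power series `p` converges absolutely at `z`, with sum `v`. -/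
def SumsAbsTo (p : 𝕜⟦X⟧) (z v : 𝕜) : Prop :=
  (Summable fun n => ‖coeff n p * z ^ n‖) ∧ HasSum (fun n => coeff n p * z ^ n) v

theorem sumsAbsTo_polynomial (p : Polynomial 𝕜) (z : 𝕜) :
    SumsAbsTo (p : 𝕜⟦X⟧) z (p.eval z) := by
  have hsupp : ∀ n ∉ p.support, coeff n (p : 𝕜⟦X⟧) * z ^ n = 0 := fun n hn => by
    simp [Polynomial.notMem_support_iff.1 hn]
  constructor
  · exact summable_of_ne_finset_zero fun n hn => by rw [hsupp n hn, norm_zero]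
  · simpa [Polynomial.eval_eq_sum, Polynomial.sum] using hasSum_sum_of_ne_finset_zero hsupp

theorem SumsAbsTo.constantCoeff_eq {p : 𝕜⟦X⟧} {v : 𝕜}
    (h : SumsAbsTo p 0 v) : constantCoeff p = v := by
  refine HasSum.unique ?_ h.2
  simpa using hasSum_single (f := fun n => coeff n p * (0 : 𝕜) ^ n) 0 fun n hn => by simp [hn]

theorem SumsAbsTo.add {p q : 𝕜⟦X⟧} {z u v : 𝕜} (hp : SumsAbsTo p z u) (hq : SumsAbsTo q z v) :
    SumsAbsTo (p + q) z (u + v) := by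
  simp only [SumsAbsTo, map_add, add_mul]
  exact ⟨.of_nonneg_of_le (fun _ => norm_nonneg _) (fun _ => norm_add_le _ _) (hp.1.add hq.1),
    hp.2.add hq.2⟩

theorem SumsAbsTo.mul [CompleteSpace 𝕜] {p q : 𝕜⟦X⟧} {z u v : 𝕜} (hp : SumsAbsTo p z u)
    (hq : SumsAbsTo q z v) : SumsAbsTo (p * q) z (u * v) := by
  have hcoeff : ∀ n, coeff n (p * q) * z ^ n =
      ∑ kl ∈ Finset.HasAntidiagonal.antidiagonal n,
        coeff kl.1 p * z ^ kl.1 * (coeff kl.2 q * z ^ kl.2) := fun n => by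
    rw [coeff_mul, Finset.sum_mul]
    refine Finset.sum_congr rfl fun kl hkl => ?_
    rw [← Finset.HasAntidiagonal.mem_antidiagonal.1 hkl, pow_add, mul_mul_mul_comm]
  have hsum := summable_norm_sum_mul_antidiagonal_of_summable_norm hp.1 hq.1
  rw [← hp.2.tsum_eq, ← hq.2.tsum_eq,
    tsum_mul_tsum_eq_tsum_sum_antidiagonal_of_summable_norm hp.1 hq.1]
  simp only [SumsAbsTo, hcoeff]
  exact ⟨hsum, hsum.of_norm.hasSum⟩

theorem SumsAbsTo.pow [CompleteSpace 𝕜] {p : 𝕜⟦X⟧} {z v : 𝕜} (h : SumsAbsTo p z v) (k : ℕ) :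
    SumsAbsTo (p ^ k) z (v ^ k) := by
  induction k with
  | zero => simpa using sumsAbsTo_polynomial 1 z
  | succ k ih => simpa only [pow_succ] using ih.mul h

theorem SumsAbsTo.aeval [CompleteSpace 𝕜] {b : 𝕜⟦X⟧} {z v : 𝕜} (h : SumsAbsTo b z v)
    (p : Polynomial 𝕜) : SumsAbsTo (Polynomial.aeval b p) z (p.eval v) := by
  induction p using Polynomial.induction_on' with
  | add p q hp hq => simpa using hp.add hq
  | monomial k c => simpa using (sumsAbsTo_polynomial (Polynomial.C c) z).mul (h.pow k)

end Evaluation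

section Parseval

open MeasureTheory AddCircle

theorem hasSum_norm_sq_of_orthonormal {𝕜 ι E : Type*} [RCLike 𝕜] [NormedAddCommGroup E]
    [InnerProductSpace 𝕜 E] {v : ι → E} (hv : Orthonormal 𝕜 v) {c : ι → 𝕜} {x : E}
    (hx : HasSum (fun i => c i • v i) x) : HasSum (fun i => ‖c i‖ ^ 2) (‖x‖ ^ 2) := by
  refine (hx.norm.pow 2).congr fun s => ?_
  have hs := hv.inner_sum c c s
  simp only [RCLike.conj_mul, inner_self_eq_norm_sq_to_K] at hs
  exact_mod_cast hs

theorem exists_Lp_hasSum_norm_sq_coeff {p : ℂ⟦X⟧} {F : ℂ → ℂ}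
    (hp : ∀ z, ‖z‖ = 1 → SumsAbsTo p z (F z)) :
    ∃ f : Lp ℂ 2 (haarAddCircle (T := 1)),
      (f =ᵐ[haarAddCircle] fun t => F (toCircle t)) ∧
        HasSum (fun n => ‖coeff n p‖ ^ 2) (‖f‖ ^ 2) := by
  have hsum : Summable fun n : ℕ => coeff n p • fourier (T := 1) n := by
    refine .of_norm ?_
    simpa only [norm_smul, fourier_norm, one_pow, mul_one] using (hp 1 norm_one).1
  obtain ⟨f, hf⟩ := hsum
  have hfF : ∀ t, f t = F (toCircle t) := fun t => by
    refine (ContinuousMap.hasSum_apply hf t).unique ?_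
    simpa [toCircle_nsmul] using (hp (toCircle t) (Circle.norm_coe _)).2
  refine ⟨ContinuousMap.toLp 2 haarAddCircle ℂ f, ?_, ?_⟩
  · filter_upwards [ContinuousMap.coeFn_toLp (p := 2) (𝕜 := ℂ) haarAddCircle f] with t ht
    rw [ht, hfF]
  · refine hasSum_norm_sq_of_orthonormal (orthonormal_fourier.comp _ Nat.cast_injective) ?_
    simpa [fourierLp] using (ContinuousMap.toLp 2 haarAddCircle ℂ).hasSum hf

theorem sum_norm_sq_coeff_le_of_norm_le_on_circle {p q : ℂ⟦X⟧} {F G : ℂ → ℂ}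
    (hp : ∀ z, ‖z‖ = 1 → SumsAbsTo p z (F z)) (hq : ∀ z, ‖z‖ = 1 → SumsAbsTo q z (G z))
    (hFG : ∀ z, ‖z‖ = 1 → ‖F z‖ ≤ ‖G z‖) (s : Finset ℕ) :
    ∑ n ∈ s, ‖coeff n p‖ ^ 2 ≤ ∑' n, ‖coeff n q‖ ^ 2 := by
  obtain ⟨f, hfF, hf⟩ := exists_Lp_hasSum_norm_sq_coeff hp
  obtain ⟨g, hgG, hg⟩ := exists_Lp_hasSum_norm_sq_coeff hq
  have hfg : ‖f‖ ≤ ‖g‖ := by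
    refine Lp.norm_le_norm_of_ae_le ?_
    filter_upwards [hfF, hgG] with t hft hgt
    rw [hft, hgt]
    exact hFG _ (Circle.norm_coe _)
  calc ∑ n ∈ s, ‖coeff n p‖ ^ 2 ≤ ‖f‖ ^ 2 := sum_le_hasSum s (fun _ _ => by positivity) hf
    _ ≤ ‖g‖ ^ 2 := by gcongr
    _ = ∑' n, ‖coeff n q‖ ^ 2 := hg.tsum_eq.symm

end Parseval

section Subordination

theorem sum_mul_nonneg_of_antitone {γ d : ℕ → ℝ} (hγ : Antitone γ) (hγ0 : ∀ n, 0 ≤ γ n)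
    (hd : ∀ N, 0 ≤ ∑ i ∈ Finset.range N, d i) (N : ℕ) :
    0 ≤ ∑ i ∈ Finset.range N, γ i * d i := by
  have habel := Finset.sum_range_by_parts γ d N
  simp only [smul_eq_mul] at habel
  rw [habel, sub_nonneg]
  exact (Finset.sum_nonpos fun i _ => mul_nonpos_of_nonpos_of_nonneg
    (sub_nonpos.2 (hγ i.le_succ)) (hd (i + 1))).trans (mul_nonneg (hγ0 _) (hd N))

theorem norm_weightedJet_le_of_antitone {𝕜 : Type*} [RCLike 𝕜] {β : ℕ → ℝ} (hβ : Antitone β)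
    (hβ0 : ∀ n, 0 ≤ β n) {f g : 𝕜⟦X⟧} (h : ∀ N, ‖weightedJet 1 N f‖ ≤ ‖weightedJet 1 N g‖)
    (N : ℕ) : ‖weightedJet β N f‖ ≤ ‖weightedJet β N g‖ := by
  have hpartial : ∀ N, 0 ≤ ∑ i ∈ Finset.range N, (‖coeff i g‖ ^ 2 - ‖coeff i f‖ ^ 2) := fun N => by
    have hN := pow_le_pow_left₀ (norm_nonneg _) (h N) 2
    simpa [norm_sq_weightedJet] using hN
  have hsq : Antitone fun n => β n ^ 2 := fun _ n hmn => pow_le_pow_left₀ (hβ0 n) (hβ hmn) 2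
  have hsum := sum_mul_nonneg_of_antitone hsq (fun n => sq_nonneg (β n)) hpartial N
  simp only [mul_sub, Finset.sum_sub_distrib, ← norm_sq_weightedJet, sub_nonneg] at hsum
  exact le_of_sq_le_sq hsum (norm_nonneg _)

theorem norm_weightedJet_one_succ_mul_le {b : ℂ⟦X⟧} {ψ : ℂ → ℂ}
    (hb : ∀ z, ‖z‖ = 1 → SumsAbsTo b z (ψ z)) (hψ : ∀ z, ‖z‖ = 1 → ‖ψ z‖ ≤ 1)
    (hb0 : constantCoeff b = 0) (N : ℕ) (f : ℂ⟦X⟧) :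
    ‖weightedJet 1 (N + 1) (b * f)‖ ≤ ‖weightedJet 1 N f‖ := by
  set q := trunc N f
  have hdvd : X ^ (N + 1) ∣ b * f - b * (q : ℂ⟦X⟧) := by
    rw [← mul_sub, pow_succ']
    exact mul_dvd_mul (X_dvd_iff.2 hb0) (X_pow_dvd_sub_trunc N f)
  have hnorm : ∀ z : ℂ, ‖z‖ = 1 → ‖ψ z * q.eval z‖ ≤ ‖q.eval z‖ := fun z hz => by
    rw [norm_mul]
    exact mul_le_of_le_one_left (norm_nonneg _) (hψ z hz)
  refine le_of_sq_le_sq ?_ (norm_nonneg _)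
  rw [weightedJet_eq_of_X_pow_dvd_sub 1 hdvd, norm_sq_weightedJet, norm_sq_weightedJet]
  simp only [Pi.one_apply, one_pow, one_mul]
  refine (sum_norm_sq_coeff_le_of_norm_le_on_circle
    (fun z hz => (hb z hz).mul (sumsAbsTo_polynomial q z))
    (fun z _ => sumsAbsTo_polynomial q z) hnorm _).trans_eq ?_
  rw [tsum_eq_sum (s := Finset.range N)]
  · refine Finset.sum_congr rfl fun i hi => ?_
    simp [q, coeff_trunc, Finset.mem_range.1 hi]
  · intro i hi
    simp [q, coeff_trunc, Finset.mem_range.not.1 hi]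

theorem subst_eq_mul_subst_shift_add_const {R : Type*} [CommRing R] {b : R⟦X⟧}
    (hb : HasSubst b) (f : R⟦X⟧) :
    f.subst b = b * (mk fun n => coeff (n + 1) f).subst b + C (constantCoeff f) := by
  conv_lhs => rw [eq_X_mul_shift_add_const f]
  rw [subst_add hb, subst_mul hb, subst_X hb, subst_C]
  rfl

theorem constantCoeff_subst_of_constantCoeff_eq_zero {R : Type*} [CommRing R] {b : R⟦X⟧}
    (hb0 : constantCoeff b = 0) (f : R⟦X⟧) : constantCoeff (f.subst b) = constantCoeff f := by
  rw [subst_eq_mul_subst_shift_add_const (.of_constantCoeff_zero' hb0)]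
  simp [hb0]

theorem norm_weightedJet_one_subst_le {b : ℂ⟦X⟧} {ψ : ℂ → ℂ}
    (hb : ∀ z, ‖z‖ = 1 → SumsAbsTo b z (ψ z)) (hψ : ∀ z, ‖z‖ = 1 → ‖ψ z‖ ≤ 1)
    (hb0 : constantCoeff b = 0) (N : ℕ) (f : ℂ⟦X⟧) :
    ‖weightedJet 1 N (f.subst b)‖ ≤ ‖weightedJet 1 N f‖ := by
  induction N generalizing f with
  | zero => exact (congrArg norm (Subsingleton.elim _ _)).le
  | succ N ih =>
    set g : ℂ⟦X⟧ := mk fun n => coeff (n + 1) f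
    have hg : ‖weightedJet 1 (N + 1) (b * g.subst b)‖ ≤ ‖weightedJet 1 N g‖ :=
      (norm_weightedJet_one_succ_mul_le hb hψ hb0 N _).trans (ih g)
    refine le_of_sq_le_sq ?_ (norm_nonneg _)
    rw [subst_eq_mul_subst_shift_add_const (.of_constantCoeff_zero' hb0),
      norm_sq_weightedJet_succ_add_const 1 N (by simp [hb0])]
    calc ((1 : ℕ → ℝ) 0 * ‖constantCoeff f‖) ^ 2 + ‖weightedJet 1 (N + 1) (b * g.subst b)‖ ^ 2
        ≤ ((1 : ℕ → ℝ) 0 * ‖constantCoeff f‖) ^ 2 + ‖weightedJet 1 N g‖ ^ 2 := by gcongr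
      _ = ‖weightedJet 1 (N + 1) f‖ ^ 2 := by
        simp [norm_sq_weightedJet_succ, norm_sq_weightedJet, g]

end Subordination

section PolynomialGrowth

/-- The weight `β` is nonnegative and grows at most like `(n + 1) ^ s`, in the monotone sense that
`β n / (n + 1) ^ s` is antitone. For the weights `β` of a space of polynomial growth this holds for
all large `s`. -/
structure IsPolyWeight (s : ℕ) (β : ℕ → ℝ) : Prop where
  nonneg : ∀ n, 0 ≤ β n
  antitone : Antitone fun n => β n / ((n : ℝ) + 1) ^ s

/-- The weight `β (n + 1) / (n + 1)`, for which the norm of `f'` is the `β`-norm of `f - f 0`. -/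
def derivWeight (β : ℕ → ℝ) (n : ℕ) : ℝ := β (n + 1) / ((n : ℝ) + 1)

variable {s : ℕ} {β : ℕ → ℝ}

theorem IsPolyWeight.add_le (hβ : IsPolyWeight s β) (k n : ℕ) :
    β (n + k) ≤ ((k : ℝ) + 1) ^ s * β n := by
  have hmono : β (n + k) / (((n + k : ℕ) : ℝ) + 1) ^ s ≤ β n / ((n : ℝ) + 1) ^ s :=
    hβ.antitone (Nat.le_add_right n k)
  have hsucc_mul : ((n + k : ℕ) : ℝ) + 1 ≤ ((k : ℝ) + 1) * ((n : ℝ) + 1) := by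
    push_cast
    nlinarith [mul_nonneg (Nat.cast_nonneg (α := ℝ) k) (Nat.cast_nonneg (α := ℝ) n)]
  have hn := hβ.nonneg n
  calc β (n + k) ≤ β n / ((n : ℝ) + 1) ^ s * (((n + k : ℕ) : ℝ) + 1) ^ s :=
        (div_le_iff₀ (by positivity)).1 hmono
    _ ≤ β n / ((n : ℝ) + 1) ^ s * (((k : ℝ) + 1) * ((n : ℝ) + 1)) ^ s := by gcongr
    _ = ((k : ℝ) + 1) ^ s * β n := by rw [mul_pow]; field_simp

theorem isPolyWeight_derivWeight (hβ : IsPolyWeight (s + 1) β) :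
    IsPolyWeight s (derivWeight β) where
  nonneg n := div_nonneg (hβ.nonneg _) (by positivity)
  antitone := by
    have hfactor : ∀ n : ℕ, derivWeight β n / ((n : ℝ) + 1) ^ s =
        β (n + 1) / (((n + 1 : ℕ) : ℝ) + 1) ^ (s + 1) * (1 + ((n : ℝ) + 1)⁻¹) ^ (s + 1) :=
      fun n => by
      rw [derivWeight]
      have hratio : 1 + ((n : ℝ) + 1)⁻¹ = (((n + 1 : ℕ) : ℝ) + 1) / ((n : ℝ) + 1) := by
        push_cast
        field_simp
      rw [hratio, div_pow, pow_succ ((n : ℝ) + 1)]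
      field_simp
    simp only [hfactor]
    intro m n hmn
    have hm := hβ.nonneg (m + 1)
    have hβmn := hβ.antitone (Nat.succ_le_succ hmn)
    simp only [Nat.succ_eq_add_one] at hβmn
    dsimp only
    gcongr

theorem betaSeq_pos {w : ℕ → ℝ} (hw : ∀ k, 1 ≤ k → 0 < w k) (n : ℕ) : 0 < betaSeq w n :=
  Finset.prod_pos fun j hj => hw j (Finset.mem_Icc.1 hj).1

theorem betaSeq_succ (w : ℕ → ℝ) (n : ℕ) : betaSeq w (n + 1) = betaSeq w n * w (n + 1) :=
  Finset.prod_Icc_succ_top (Nat.le_add_left 1 n) w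

theorem isPolyWeight_betaSeq {w : ℕ → ℝ} (hw : ∀ k, 1 ≤ k → 0 < w k)
    (hws : ∀ k : ℕ, 1 ≤ k → (k : ℝ) * (w k - 1) ≤ s) : IsPolyWeight s (betaSeq w) where
  nonneg n := (betaSeq_pos hw n).le
  antitone := by
    refine antitone_nat_of_succ_le fun n => ?_
    have hβ := betaSeq_pos hw n
    have hwn : w (n + 1) ≤ 1 + s * ((n : ℝ) + 1)⁻¹ := by
      rw [← div_eq_mul_inv, ← sub_le_iff_le_add', le_div_iff₀' (by positivity)]
      exact_mod_cast hws (n + 1) (Nat.le_add_left 1 n)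
    have hbernoulli : 1 + s * ((n : ℝ) + 1)⁻¹ ≤ (1 + ((n : ℝ) + 1)⁻¹) ^ s :=
      one_add_mul_le_pow (by linarith [show 0 ≤ ((n : ℝ) + 1)⁻¹ by positivity]) s
    have hratio : (((n + 1 : ℕ) : ℝ) + 1) = (1 + ((n : ℝ) + 1)⁻¹) * ((n : ℝ) + 1) := by
      push_cast
      field_simp
    rw [div_le_div_iff₀ (by positivity) (by positivity), betaSeq_succ, hratio, mul_pow, mul_assoc]
    gcongr
    exact hwn.trans hbernoulli

end PolynomialGrowth

section Composition

theorem norm_sq_weightedJet_succ_eq_derivative {𝕜 : Type*} [RCLike 𝕜] (β : ℕ → ℝ) (N : ℕ)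
    (f : 𝕜⟦X⟧) :
    ‖weightedJet β (N + 1) f‖ ^ 2 =
      (β 0 * ‖constantCoeff f‖) ^ 2 + ‖weightedJet (derivWeight β) N (derivative 𝕜 f)‖ ^ 2 := by
  rw [norm_sq_weightedJet_succ, norm_sq_weightedJet]
  congr 1
  refine Finset.sum_congr rfl fun i _ => ?_
  have hnorm : ‖(i : 𝕜) + 1‖ = (i : ℝ) + 1 := by
    exact_mod_cast RCLike.norm_natCast (K := 𝕜) (i + 1)
  rw [derivWeight, coeff_derivative, norm_mul, hnorm]
  field_simp

theorem IsPolyWeight.norm_weightedJet_mul_le {𝕜 : Type*} [RCLike 𝕜] {s : ℕ} {β : ℕ → ℝ}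
    (hβ : IsPolyWeight s β) {b : 𝕜⟦X⟧} (hb : Summable fun k : ℕ => ((k : ℝ) + 1) ^ s * ‖coeff k b‖)
    (N : ℕ) (f : 𝕜⟦X⟧) :
    ‖weightedJet β N (b * f)‖ ≤
      (∑' k : ℕ, ((k : ℝ) + 1) ^ s * ‖coeff k b‖) * ‖weightedJet β N f‖ :=
  norm_weightedJet_mul_le_tsum hβ.nonneg (fun _ => by positivity) hβ.add_le hb N f

theorem summable_mul_norm_coeff_derivative {𝕜 : Type*} [RCLike 𝕜] {s : ℕ} {b : 𝕜⟦X⟧}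
    (hb : Summable fun k : ℕ => ((k : ℝ) + 1) ^ (s + 1) * ‖coeff k b‖) :
    Summable fun k : ℕ => ((k : ℝ) + 1) ^ s * ‖coeff k (derivative 𝕜 b)‖ := by
  refine .of_nonneg_of_le (fun k => by positivity) (fun k => ?_) ((summable_nat_add_iff 1).2 hb)
  have hnorm : ‖(k : 𝕜) + 1‖ = (k : ℝ) + 1 := by
    exact_mod_cast RCLike.norm_natCast (K := 𝕜) (k + 1)
  rw [coeff_derivative, norm_mul, hnorm]
  calc ((k : ℝ) + 1) ^ s * (‖coeff (k + 1) b‖ * ((k : ℝ) + 1))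
      = ((k : ℝ) + 1) ^ (s + 1) * ‖coeff (k + 1) b‖ := by ring
    _ ≤ (((k + 1 : ℕ) : ℝ) + 1) ^ (s + 1) * ‖coeff (k + 1) b‖ := by
        gcongr
        exact_mod_cast k.le_succ

theorem exists_norm_weightedJet_subst_le {b : ℂ⟦X⟧} {ψ : ℂ → ℂ}
    (hb : ∀ z, ‖z‖ = 1 → SumsAbsTo b z (ψ z)) (hψ : ∀ z, ‖z‖ = 1 → ‖ψ z‖ ≤ 1)
    (hb0 : constantCoeff b = 0) {s : ℕ} {β : ℕ → ℝ} (hβ : IsPolyWeight s β)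
    (hbs : Summable fun k : ℕ => ((k : ℝ) + 1) ^ s * ‖coeff k b‖) :
    ∃ K, ∀ (N : ℕ) (f : ℂ⟦X⟧),
      ‖weightedJet β N (f.subst b)‖ ≤ K * ‖weightedJet β N f‖ := by
  induction s generalizing β with
  | zero =>
    have hanti : Antitone β := by simpa using hβ.antitone
    exact ⟨1, fun N f => by
      simpa using norm_weightedJet_le_of_antitone hanti hβ.nonneg
        (fun N => norm_weightedJet_one_subst_le hb hψ hb0 N f) N⟩
  | succ s ih =>
    have hderiv := summable_mul_norm_coeff_derivative hbs
    obtain ⟨K, hK⟩ := ih (isPolyWeight_derivWeight hβ) (by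
      refine .of_nonneg_of_le (fun k => by positivity) (fun k => ?_) hbs
      gcongr <;> simp)
    set L := ∑' k : ℕ, ((k : ℝ) + 1) ^ s * ‖coeff k (derivative ℂ b)‖
    have hL : 0 ≤ L := tsum_nonneg fun k => by positivity
    have hchain : ∀ N f, ‖weightedJet (derivWeight β) N (derivative ℂ (f.subst b))‖ ≤
        L * K * ‖weightedJet (derivWeight β) N (derivative ℂ f)‖ := fun N f => by
      rw [derivative_subst (.of_constantCoeff_zero' hb0), mul_comm, mul_assoc]
      exact ((isPolyWeight_derivWeight hβ).norm_weightedJet_mul_le hderiv N _).trans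
        (mul_le_mul_of_nonneg_left (hK N _) hL)
    refine ⟨max 1 (L * K), fun N f => ?_⟩
    cases N with
    | zero => simp [Subsingleton.elim (weightedJet β 0 _) 0]
    | succ N =>
      refine le_of_sq_le_sq ?_ (by positivity)
      rw [mul_pow, norm_sq_weightedJet_succ_eq_derivative, norm_sq_weightedJet_succ_eq_derivative,
        constantCoeff_subst_of_constantCoeff_eq_zero hb0, mul_add]
      gcongr
      · exact le_mul_of_one_le_left (sq_nonneg _) (one_le_pow₀ (le_max_left _ _))
      · rw [← mul_pow]
        gcongr
        refine (hchain N f).trans ?_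
        gcongr
        exact le_max_right _ _

end Composition

section ClosedDisk

theorem summable_succ_pow_mul_norm_coeff {𝕜 : Type*} [NontriviallyNormedField 𝕜]
    (p : FormalMultilinearSeries 𝕜 𝕜 𝕜) (hp : 1 < p.radius) (s : ℕ) :
    Summable fun n : ℕ => ((n : ℝ) + 1) ^ s * ‖p.coeff n‖ := by
  obtain ⟨a, ha, C, -, hC⟩ := p.norm_mul_pow_le_mul_pow_of_lt_radius (r := 1) (by simpa using hp)
  have ha1 : ‖a‖ < 1 := by rw [Real.norm_of_nonneg ha.1.le]; exact ha.2
  have hgeom := summable_pow_mul_geometric_of_norm_lt_one s ha1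
  have hsum := ((summable_nat_add_iff 1).2 hgeom).mul_left (C * a⁻¹)
  refine .of_nonneg_of_le (fun n => by positivity) (fun n => ?_) hsum
  have hcoeff : ‖p.coeff n‖ ≤ C * a ^ n := by
    simpa [FormalMultilinearSeries.norm_apply_eq_norm_coef] using hC n
  calc ((n : ℝ) + 1) ^ s * ‖p.coeff n‖ ≤ ((n : ℝ) + 1) ^ s * (C * a ^ n) := by gcongr
    _ = C * a⁻¹ * (((n + 1 : ℕ) : ℝ) ^ s * a ^ (n + 1)) := by
        have := ha.1.ne'
        push_cast
        field_simp
        ring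

theorem AnalyticOnClosedDisk.exists_powerSeries {f : ℂ → ℂ} (hf : AnalyticOnClosedDisk f) :
    ∃ b : ℂ⟦X⟧, (∀ s : ℕ, Summable fun n : ℕ => ((n : ℝ) + 1) ^ s * ‖coeff n b‖) ∧
      ∀ z, ‖z‖ ≤ 1 → SumsAbsTo b z (f z) := by
  obtain ⟨U, hU, hdisk, hfU⟩ := hf
  obtain ⟨δ, hδ, hδU⟩ := (isCompact_closedBall (0 : ℂ) 1).exists_cthickening_subset_open hU hdisk
  rw [cthickening_closedBall hδ.le zero_le_one] at hδU
  lift δ to NNReal using hδ.le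
  have hseries : HasFPowerSeriesOnBall f (cauchyPowerSeries f 0 (δ + 1 : NNReal)) 0
      (δ + 1 : NNReal) :=
    DifferentiableOn.hasFPowerSeriesOnBall
      (hfU.differentiableOn.mono (by simpa using hδU)) (by positivity)
  set p := cauchyPowerSeries f 0 (δ + 1 : NNReal)
  have hradius : (1 : ENNReal) < (δ + 1 : NNReal) := by
    rw [ENNReal.one_lt_coe_iff]
    exact lt_add_of_pos_left 1 hδ
  have hsum := summable_succ_pow_mul_norm_coeff p (hradius.trans_le hseries.r_le)
  refine ⟨mk p.coeff, by simpa using hsum, fun z hz => ⟨?_, ?_⟩⟩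
  · refine .of_nonneg_of_le (fun n => norm_nonneg _) (fun n => ?_) (by simpa using hsum 0)
    rw [coeff_mk, norm_mul, norm_pow]
    exact mul_le_of_le_one_right (norm_nonneg _) (pow_le_one₀ (norm_nonneg _) hz)
  · have hzball : z ∈ Metric.eball (0 : ℂ) (δ + 1 : NNReal) := by
      rw [Metric.eball_coe, mem_ball_zero_iff]
      exact hz.trans_lt (by simpa using hδ)
    simpa [mul_comm] using hseries.hasSum hzball

theorem AnalyticOnClosedDisk.norm_le_one {f : ℂ → ℂ} (hf : AnalyticOnClosedDisk f)
    (hmaps : Set.MapsTo f unitDisk unitDisk) {z : ℂ} (hz : ‖z‖ ≤ 1) : ‖f z‖ ≤ 1 := by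
  obtain ⟨U, -, hdisk, hfU⟩ := hf
  have hclosure : closure unitDisk = Metric.closedBall (0 : ℂ) 1 := closure_ball 0 one_ne_zero
  have hmaps' := hmaps.closure_of_continuousOn (by
    rw [hclosure]
    exact hfU.continuousOn.mono hdisk)
  rw [hclosure] at hmaps'
  simpa using hmaps' (show z ∈ Metric.closedBall (0 : ℂ) 1 by simpa using hz)

end ClosedDisk

section Operators

/-- The Taylor series at `0` of the function that a vector of the `ℓ²`-model of `H²_β` represents,
as a formal power series. -/
def toSeries (β : ℕ → ℝ) : H2 →ₗ[ℂ] ℂ⟦X⟧ where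
  toFun a := mk fun k => a k / (β k : ℂ)
  map_add' a b := by ext k; simp [add_div]
  map_smul' c a := by ext k; simp [mul_div_assoc]

variable {β : ℕ → ℝ}

theorem ofReal_mul_coeff_toSeries (hβ : ∀ n, β n ≠ 0) (a : H2) (n : ℕ) :
    (β n : ℂ) * coeff n (toSeries β a) = a n := by
  have hn : (β n : ℂ) ≠ 0 := ofReal_ne_zero.2 (hβ n)
  simp [toSeries, mul_div_cancel₀ _ hn]

theorem toSeries_injective (hβ : ∀ n, β n ≠ 0) : Function.Injective (toSeries β) := by
  intro a b hab
  ext n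
  rw [← ofReal_mul_coeff_toSeries hβ, hab, ofReal_mul_coeff_toSeries hβ]

theorem norm_weightedJet_toSeries_le (hβ : ∀ n, β n ≠ 0) (a : H2) (N : ℕ) :
    ‖weightedJet β N (toSeries β a)‖ ≤ ‖a‖ := by
  have hsum := lp.sum_rpow_le_norm_rpow (by norm_num) a (Finset.range N)
  simp only [ENNReal.toReal_ofNat, Real.rpow_two, ← ofReal_mul_coeff_toSeries hβ a, norm_mul,
    mul_pow, norm_real, Real.norm_eq_abs, sq_abs] at hsum
  exact le_of_sq_le_sq ((norm_sq_weightedJet β N _).trans_le hsum) (norm_nonneg _)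

theorem exists_toSeries_eq_of_norm_weightedJet_le (hβ : ∀ n, β n ≠ 0) {f : ℂ⟦X⟧} {C : ℝ}
    (hf : ∀ N, ‖weightedJet β N f‖ ≤ C) : ∃ a : H2, toSeries β a = f ∧ ‖a‖ ≤ C := by
  have hC : 0 ≤ C := (norm_nonneg _).trans (hf 0)
  have hsum : ∀ t : Finset ℕ,
      ∑ i ∈ t, ‖(β i : ℂ) * coeff i f‖ ^ (2 : ENNReal).toReal ≤ C ^ (2 : ENNReal).toReal :=
      fun t => by
    obtain ⟨N, hN⟩ := t.exists_nat_subset_range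
    refine (Finset.sum_le_sum_of_subset_of_nonneg hN fun i _ _ => by positivity).trans ?_
    have hsq := pow_le_pow_left₀ (norm_nonneg _) (hf N) 2
    simpa [norm_sq_weightedJet, mul_pow] using hsq
  refine ⟨⟨fun i => (β i : ℂ) * coeff i f, memℓp_gen' hsum⟩, ?_,
    lp.norm_le_of_forall_sum_le (by norm_num) hC hsum⟩
  ext n
  have hn : (β n : ℂ) ≠ 0 := ofReal_ne_zero.2 (hβ n)
  simp [toSeries, mul_div_cancel_left₀ _ hn]

theorem exists_continuousLinearMap_toSeries_eq (hβ : ∀ n, β n ≠ 0) (Φ : ℂ⟦X⟧ →ₗ[ℂ] ℂ⟦X⟧)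
    {K : ℝ} (hΦ : ∀ N f, ‖weightedJet β N (Φ f)‖ ≤ K * ‖weightedJet β N f‖) :
    ∃ T : H2 →L[ℂ] H2, ∀ a, toSeries β (T a) = Φ (toSeries β a) := by
  have hbound : ∀ (a : H2) N, ‖weightedJet β N (Φ (toSeries β a))‖ ≤ |K| * ‖a‖ := fun a N =>
    (hΦ N _).trans (mul_le_mul (le_abs_self K) (norm_weightedJet_toSeries_le hβ a N)
      (norm_nonneg _) (abs_nonneg K))
  choose S hS hSnorm using fun a => exists_toSeries_eq_of_norm_weightedJet_le hβ (hbound a)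
  let T : H2 →ₗ[ℂ] H2 :=
    { toFun := S
      map_add' := fun a b => toSeries_injective hβ (by simp only [map_add, hS])
      map_smul' := fun c a =>
        toSeries_injective hβ (by simp only [map_smul, hS, RingHom.id_apply]) }
  exact ⟨T.mkContinuous |K| hSnorm, hS⟩

theorem SumsAbsTo.repFun_eq {a : H2} {z v : ℂ} (h : SumsAbsTo (toSeries β a) z v) :
    repFun β a z = v := by
  simpa [repFun, toSeries] using h.2.tsum_eq

theorem summable_sq_pow_div_of_tendsto_ratio (hβ : ∀ n, β n ≠ 0)
    (hratio : Tendsto (fun n => β (n + 1) / β n) atTop (𝓝 1)) {x : ℝ} (hx : |x| < 1) :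
    Summable fun n => (x ^ n / β n) ^ 2 := by
  have hlim : Tendsto (fun n => (x / (β (n + 1) / β n)) ^ 2) atTop (𝓝 (x ^ 2)) := by
    simpa using ((tendsto_const_nhds (x := x)).div hratio one_ne_zero).pow 2
  obtain ⟨r, hxr, hr⟩ := exists_between ((sq_lt_one_iff_abs_lt_one x).2 hx)
  refine summable_of_ratio_norm_eventually_le hr ?_
  filter_upwards [hlim.eventually_lt_const hxr] with n hn
  have hstep : (x ^ (n + 1) / β (n + 1)) ^ 2 =
      (x / (β (n + 1) / β n)) ^ 2 * (x ^ n / β n) ^ 2 := by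
    have := hβ n
    have := hβ (n + 1)
    field_simp
    ring
  rw [hstep, norm_mul, Real.norm_of_nonneg (sq_nonneg _)]
  gcongr

theorem exists_continuousLinearMap_eq_repFun {z : ℂ}
    (hz : Summable fun n => (‖z‖ ^ n / β n) ^ 2) : ∃ L : H2 →L[ℂ] ℂ, ∀ a, L a = repFun β a z := by
  have hmem : Memℓp (fun n => (starRingEnd ℂ) (z ^ n / (β n : ℂ))) 2 := by
    refine memℓp_gen (hz.congr fun n => ?_)
    simp [div_pow]
  refine ⟨innerSL ℂ (⟨_, hmem⟩ : H2), fun a => ?_⟩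
  rw [innerSL_apply_apply, lp.inner_eq_tsum, repFun]
  exact tsum_congr fun n => by simp; ring

theorem toSeries_single (k : ℕ) :
    toSeries β (lp.single 2 k 1) =
      ((Polynomial.C (β k : ℂ)⁻¹ * Polynomial.X ^ k : Polynomial ℂ) : ℂ⟦X⟧) := by
  ext j
  by_cases hj : j = k
  · subst hj; simp [toSeries]
  · simp [toSeries, hj]

theorem repComp_of_toSeries_eq_subst {ψ : ℂ → ℂ} {b : ℂ⟦X⟧} {T : H2 →L[ℂ] H2}
    (hβ : ∀ z ∈ unitDisk, Summable fun n => (‖z‖ ^ n / β n) ^ 2)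
    (hb : HasSubst b) (hbψ : ∀ z ∈ unitDisk, SumsAbsTo b z (ψ z))
    (hmaps : Set.MapsTo ψ unitDisk unitDisk)
    (hT : ∀ a, toSeries β (T a) = (toSeries β a).subst b) : RepComp β ψ T := by
  intro a z hz
  obtain ⟨L, hL⟩ := exists_continuousLinearMap_eq_repFun (hβ z hz)
  obtain ⟨L', hL'⟩ := exists_continuousLinearMap_eq_repFun (hβ (ψ z) (hmaps hz))
  suffices h : L.comp T = L' by rw [← hL, ← hL', ← h, ContinuousLinearMap.comp_apply]
  refine lp.ext_continuousLinearMap (by simp) fun k => ContinuousLinearMap.ext_ring ?_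
  set e : H2 := lp.single 2 k 1
  set p : Polynomial ℂ := Polynomial.C (β k : ℂ)⁻¹ * Polynomial.X ^ k
  have he : toSeries β e = p := toSeries_single k
  have hleft : SumsAbsTo (toSeries β (T e)) z (p.eval (ψ z)) := by
    rw [hT, he, subst_coe hb]
    exact (hbψ z hz).aeval p
  have hright : SumsAbsTo (toSeries β e) (ψ z) (p.eval (ψ z)) := by
    rw [he]
    exact sumsAbsTo_polynomial p (ψ z)
  change L (T e) = L' e
  rw [hL, hL', hleft.repFun_eq, hright.repFun_eq]

end Operators

section Blaschke

theorem norm_one_sub_conj_mul_sq_sub_norm_sub_sq (a z : ℂ) :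
    ‖1 - (starRingEnd ℂ) a * z‖ ^ 2 - ‖a - z‖ ^ 2 = (1 - ‖a‖ ^ 2) * (1 - ‖z‖ ^ 2) := by
  apply ofReal_injective
  push_cast
  simp only [← Complex.mul_conj', map_sub, map_mul, map_one, conj_conj]
  ring

theorem one_sub_conj_mul_ne_zero {a z : ℂ} (ha : ‖a‖ < 1) (hz : ‖z‖ ≤ 1) :
    1 - (starRingEnd ℂ) a * z ≠ 0 := by
  refine sub_ne_zero.2 fun h => ?_
  have hnorm : ‖(starRingEnd ℂ) a * z‖ < 1 := by
    rw [norm_mul, norm_conj]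
    exact mul_lt_one_of_nonneg_of_lt_one_left (norm_nonneg a) ha hz
  rw [← h, norm_one] at hnorm
  exact hnorm.false

theorem norm_mobius_lt_one {a z : ℂ} (ha : ‖a‖ < 1) (hz : ‖z‖ < 1) : ‖mobius a z‖ < 1 := by
  have hden : 0 < ‖1 - (starRingEnd ℂ) a * z‖ :=
    norm_pos_iff.2 (one_sub_conj_mul_ne_zero ha hz.le)
  have hpos : 0 < (1 - ‖a‖ ^ 2) * (1 - ‖z‖ ^ 2) :=
    mul_pos (sub_pos.2 (pow_lt_one₀ (norm_nonneg a) ha two_ne_zero))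
      (sub_pos.2 (pow_lt_one₀ (norm_nonneg z) hz two_ne_zero))
  rw [← norm_one_sub_conj_mul_sq_sub_norm_sub_sq, sub_pos] at hpos
  rw [mobius, norm_div, div_lt_one hden]
  exact lt_of_pow_lt_pow_left₀ 2 hden.le hpos

theorem analyticAt_mobius {a z : ℂ} (ha : ‖a‖ < 1) (hz : ‖z‖ ≤ 1) : AnalyticAt ℂ (mobius a) z := by
  have hden := one_sub_conj_mul_ne_zero ha hz
  unfold mobius
  fun_prop (disch := assumption)

theorem IsBlaschke.analyticOnClosedDisk {m : ℕ} {B : ℂ → ℂ} (hB : IsBlaschke m B) :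
    AnalyticOnClosedDisk B := by
  obtain ⟨θ, zs, hzs, hB⟩ := hB
  refine ⟨{z | AnalyticAt ℂ B z}, isOpen_analyticAt ℂ B, fun z hz => ?_, fun z hz => hz⟩
  have hfactor : ∀ j ∈ Finset.univ, AnalyticAt ℂ (mobius (zs j)) z := fun j _ =>
    analyticAt_mobius (by simpa [unitDisk] using hzs j) (by simpa using hz)
  rw [funext hB]
  exact analyticAt_const.mul (Finset.analyticAt_fun_prod _ hfactor)

theorem IsBlaschke.mapsTo_unitDisk {m : ℕ} (hm : 0 < m) {B : ℂ → ℂ} (hB : IsBlaschke m B) :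
    Set.MapsTo B unitDisk unitDisk := by
  obtain ⟨θ, zs, hzs, hB⟩ := hB
  intro z hz
  have hlt : ∀ j, ‖mobius (zs j) z‖ < 1 := fun j =>
    norm_mobius_lt_one (by simpa [unitDisk] using hzs j) (by simpa [unitDisk] using hz)
  have hprod : ∏ j, ‖mobius (zs j) z‖ < 1 := by
    rw [← Finset.mul_prod_erase _ _ (Finset.mem_univ (⟨0, hm⟩ : Fin m))]
    exact mul_lt_one_of_nonneg_of_lt_one_left (norm_nonneg _) (hlt _)
      (Finset.prod_le_one (fun _ _ => norm_nonneg _) fun j _ => (hlt j).le)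
  simpa [unitDisk, hB, norm_exp_ofReal_mul_I] using hprod

end Blaschke

theorem PolyGrowth.exists_mul_sub_one_le {w : ℕ → ℝ} (hw : PolyGrowth w) :
    ∃ M : ℝ, ∀ k : ℕ, 1 ≤ k → (k : ℝ) * (w k - 1) ≤ M := by
  obtain ⟨-, -, M, hM⟩ := hw
  refine ⟨M, fun k hk => le_trans ?_ (hM k hk)⟩
  calc (k : ℝ) * (w k - 1) ≤ k * |w k - 1| := by
        gcongr
        exact le_abs_self _
    _ ≤ ((k : ℝ) + 1) * |w k - 1| := by
        gcongr
        exact le_add_of_nonneg_right zero_le_one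

theorem statement3_general (w : ℕ → ℝ) (hw : ∀ k, 1 ≤ k → 0 < w k)
    (hlim : Tendsto w atTop (𝓝 1)) (hgrowth : ∃ M : ℝ, ∀ k : ℕ, 1 ≤ k → (k : ℝ) * (w k - 1) ≤ M)
    (ψ : ℂ → ℂ) (hψ : AnalyticOnClosedDisk ψ) (hmaps : Set.MapsTo ψ unitDisk unitDisk)
    (hψ0 : ψ 0 = 0) : ∃ T : H2 →L[ℂ] H2, RepComp (betaSeq w) ψ T := by
  obtain ⟨M, hM⟩ := hgrowth
  obtain ⟨s, hs⟩ := exists_nat_ge M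
  have hβ : ∀ n, betaSeq w n ≠ 0 := fun n => (betaSeq_pos hw n).ne'
  have hpoly : IsPolyWeight s (betaSeq w) :=
    isPolyWeight_betaSeq hw fun k hk => (hM k hk).trans hs
  have hratio : Tendsto (fun n => betaSeq w (n + 1) / betaSeq w n) atTop (𝓝 1) := by
    simp only [betaSeq_succ, mul_div_cancel_left₀ _ (hβ _)]
    exact (tendsto_add_atTop_iff_nat 1).2 hlim
  obtain ⟨b, hbsum, hbψ⟩ := hψ.exists_powerSeries
  have hb0 : constantCoeff b = 0 := hψ0 ▸ (hbψ 0 (by simp)).constantCoeff_eq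
  have hb : HasSubst b := .of_constantCoeff_zero' hb0
  obtain ⟨K, hK⟩ := exists_norm_weightedJet_subst_le (fun z hz => hbψ z hz.le)
    (fun z hz => hψ.norm_le_one hmaps hz.le) hb0 hpoly (hbsum s)
  obtain ⟨T, hT⟩ := exists_continuousLinearMap_toSeries_eq hβ (substAlgHom hb).toLinearMap
    (by simpa only [AlgHom.toLinearMap_apply, coe_substAlgHom] using hK)
  simp only [AlgHom.toLinearMap_apply, coe_substAlgHom] at hT
  have hdisk : ∀ z ∈ unitDisk, ‖z‖ < 1 := fun z hz => by simpa [unitDisk] using hz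
  exact ⟨T, repComp_of_toSeries_eq_subst
    (fun z hz => summable_sq_pow_div_of_tendsto_ratio hβ hratio (by simpa using hdisk z hz))
    hb (fun z hz => hbψ z (hdisk z hz).le) hmaps hT⟩

/-- On a weighted Hardy space `H²_β` of polynomial growth, for any
finite Blaschke product `B` with `B(0) = 0`, the composition operator `C_B` is
bounded on `H²_β`. -/
theorem statement3 (w : ℕ → ℝ) (hw : PolyGrowth w) (m : ℕ) (hm : 0 < m)
    (B : ℂ → ℂ) (hB : IsBlaschke m B) (hB0 : B 0 = 0) :
    ∃ T : H2 →L[ℂ] H2, RepComp (betaSeq w) B T :=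
  statement3_general w hw.1 hw.2.1 hw.exists_mul_sub_one_le B hB.analyticOnClosedDisk
    (hB.mapsTo_unitDisk hm) hB0
end
end

section
/- Let H²_β be the weighted Hardy space induced by a weight sequence w = (w_k)_{k≥1} with w_k → 1, and let B(z) = ∏_{j=1}^m (z_j − z)/(1 − conj(z_j)z) be a Blaschke product of order m with z_1, …, z_m ∈ 𝔻. Let S be the standard left inverse of M_z on H²_β, defined by S(f)(z) = (f(z) − f(0))/z, and set B̄(z) = conj(B(conj z)). Then B̄(S) belongs to the Cowen–Douglas class B_m(𝔻) and B̄(S) ∘ B(M_z) = I, where I is the identity operator on H²_β. -/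
noncomputable section

open Complex Filter Topology

/-- `S` is (the ℓ²-model of) the standard left inverse of `M_z` on `H²_β`,
`S(f)(z) = (f(z) - f(0))/z`. -/
def RepS (β : ℕ → ℝ) (S : H2 →L[ℂ] H2) : Prop :=
  ∀ a : H2, ∀ z ∈ unitDisk, z ≠ 0 →
    repFun β (S a) z = (repFun β a z - repFun β a 0) / z

/-- The operator `B̄(S)` given by the holomorphic functional calculus for the
Blaschke product with zeros `zs`:  `B̄(S) = ∏_j (conj z_j - S)(1 - z_j S)⁻¹`. -/
def blaschkeBarOp {m : ℕ} (zs : Fin m → ℂ) (S : H2 →L[ℂ] H2) : H2 →L[ℂ] H2 :=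
  (List.ofFn fun j : Fin m =>
    ((starRingEnd ℂ) (zs j) • (1 : H2 →L[ℂ] H2) - S) *
      Ring.inverse ((1 : H2 →L[ℂ] H2) - zs j • S)).prod

/-- The Cowen–Douglas class `B_n(Ω)`. -/
def InCowenDouglas (n : ℕ) (Ω : Set ℂ) (T : H2 →L[ℂ] H2) : Prop :=
  Ω ⊆ spectrum ℂ T ∧
    (∀ ω ∈ Ω, LinearMap.range (T - ω • (1 : H2 →L[ℂ] H2)).toLinearMap = ⊤) ∧
    ((⨆ ω ∈ Ω, LinearMap.ker (T - ω • (1 : H2 →L[ℂ] H2)).toLinearMap).topologicalClosure = ⊤) ∧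
    ∀ ω ∈ Ω, Module.finrank ℂ ↥(LinearMap.ker (T - ω • (1 : H2 →L[ℂ] H2)).toLinearMap) = n

/-! Let `M` be multiplication by `z`, so that `S M = 1`. Because ratios of the weights grow
subexponentially, `1 - ζ M` and `1 - ζ S` are invertible for `|ζ| < 1`. Hence `S - ζ = S (1 - ζ M)`
inherits from `S` surjectivity and a one-dimensional kernel.

Write `B̄ = p / q`. For `|ω| < 1`, `(B̄(S) - ω) q(S) = (p - ω q)(S)`, where `q(S)` is invertible and
`p - ω q` has exactly `m` roots, all of them in the disk, so `B̄(S) - ω` is surjective with kernel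
of dimension `m`. The vectors `(1 - ζ M)⁻¹ 1` are eigenvectors of `S`, hence of `B̄(S)` for the
eigenvalue `B̄(ζ)`, which again lies in the disk; their Taylor coefficients in `ζ` are the monomials
`Mⁿ 1`, which span a dense subspace.

Finally, `(conj zⱼ - S) (1 - zⱼ S)⁻¹` maps `zⱼ - M` to `1 - conj zⱼ M`, and multiplying
over `j` gives `B̄(S) B(M) = 1`. -/

open Polynomial

universe u

/-! ### Surjective operators with finite-dimensional kernel -/

/-- `T` is onto and has an `n`-dimensional kernel. The dimension is the cardinal rank, so that
nullity `0` means injective. -/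
def SurjectiveOfNullity {K : Type*} [Field K] {V W : Type u} [AddCommGroup V] [Module K V]
    [AddCommGroup W] [Module K W] (T : V →ₗ[K] W) (n : ℕ) : Prop :=
  Function.Surjective T ∧ Module.rank K (LinearMap.ker T) = n

namespace SurjectiveOfNullity

variable {K : Type*} [Field K] {V W Z : Type u} [AddCommGroup V] [Module K V] [AddCommGroup W]
  [Module K W] [AddCommGroup Z] [Module K Z] {n k : ℕ}

theorem comp {T : W →ₗ[K] Z} {U : V →ₗ[K] W} (hT : SurjectiveOfNullity T n)
    (hU : SurjectiveOfNullity U k) : SurjectiveOfNullity (T ∘ₗ U) (n + k) := by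
  refine ⟨hT.1.comp hU.1, ?_⟩
  let R : LinearMap.ker (T ∘ₗ U) →ₗ[K] LinearMap.ker T := U.restrict fun _ hx => hx
  have range_R : LinearMap.range R = ⊤ := LinearMap.range_eq_top.2 fun ⟨y, hy⟩ => by
    obtain ⟨x, rfl⟩ := hU.1 y
    exact ⟨⟨x, hy⟩, rfl⟩
  have ker_R : LinearMap.ker R = (LinearMap.ker U).submoduleOf (LinearMap.ker (T ∘ₗ U)) :=
    LinearMap.ker_restrict _
  rw [← LinearMap.rank_range_add_rank_ker R, range_R, rank_top, hT.2, ker_R,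
    (Submodule.submoduleOfEquivOfLe (LinearMap.ker_le_ker_comp U T)).rank_eq, hU.2, Nat.cast_add]

theorem of_bijective {T : V →ₗ[K] W} (hT : Function.Bijective T) : SurjectiveOfNullity T 0 :=
  ⟨hT.2, by rw [LinearMap.ker_eq_bot.2 hT.1, rank_bot, Nat.cast_zero]⟩

theorem of_isUnit {T : Module.End K V} (hT : IsUnit T) : SurjectiveOfNullity T 0 :=
  of_bijective ((Module.End.isUnit_iff T).1 hT)

theorem of_mul_isUnit {T U : Module.End K V} (hU : IsUnit U)
    (hTU : SurjectiveOfNullity (T * U) n) : SurjectiveOfNullity T n := by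
  obtain ⟨u, rfl⟩ := hU
  simpa only [← Module.End.mul_eq_comp, mul_assoc, Units.mul_inv, mul_one, add_zero]
    using hTU.comp (of_isUnit u⁻¹.isUnit)

theorem finrank_ker_eq {T : V →ₗ[K] W} (hT : SurjectiveOfNullity T n) :
    Module.finrank K (LinearMap.ker T) = n :=
  Module.finrank_eq_of_rank_eq hT.2

theorem not_isUnit {T : Module.End K V} (hT : SurjectiveOfNullity T n) (hn : n ≠ 0) :
    ¬IsUnit T := fun hU =>
  hn (hT.finrank_ker_eq.symm.trans (of_isUnit hU).finrank_ker_eq)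

theorem aeval_prod_X_sub_C {T : Module.End K V} (s : Multiset K)
    (h : ∀ ζ ∈ s, SurjectiveOfNullity (T - algebraMap K _ ζ) 1) :
    SurjectiveOfNullity (aeval T (s.map fun ζ => X - C ζ).prod) (Multiset.card s) := by
  induction s using Multiset.induction_on with
  | empty => simpa using of_isUnit (isUnit_one (M := Module.End K V))
  | cons ζ s ih =>
    have factor := h ζ (Multiset.mem_cons_self ζ s)
    have rest := ih fun ξ hξ => h ξ (Multiset.mem_cons_of_mem hξ)
    rw [Multiset.map_cons, Multiset.prod_cons, map_mul, map_sub, aeval_X, aeval_C,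
      Multiset.card_cons, add_comm]
    exact factor.comp rest

theorem aeval_of_splits {T : Module.End K V} {p : K[X]} (hp : p.Splits) (hp0 : p ≠ 0)
    (h : ∀ ζ, p.IsRoot ζ → SurjectiveOfNullity (T - algebraMap K _ ζ) 1) :
    SurjectiveOfNullity (aeval T p) p.natDegree := by
  have hlead : IsUnit (aeval T (C p.leadingCoeff)) := by
    rw [aeval_C]
    exact (IsUnit.mk0 _ (leadingCoeff_ne_zero.2 hp0)).map _
  have hroots := aeval_prod_X_sub_C p.roots fun ζ hζ => h ζ (isRoot_of_mem_roots hζ)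
  have hprod := (of_isUnit hlead).comp hroots
  rwa [← Module.End.mul_eq_comp, ← map_mul, ← hp.eq_prod_roots, zero_add,
    ← hp.natDegree_eq_card_roots] at hprod

/-- Clearing denominators: if `R = p(T) q(T)⁻¹`, then `(R - ω) q(T) = (p - ω q)(T)`. -/
theorem sub_algebraMap_of_mul_aeval_eq [IsAlgClosed K] {R T : Module.End K V} {p q : K[X]}
    (hR : R * aeval T q = aeval T p) (hq : IsUnit (aeval T q)) {ω : K} (hpq : p - C ω * q ≠ 0)
    (h : ∀ ζ, (p - C ω * q).IsRoot ζ → SurjectiveOfNullity (T - algebraMap K _ ζ) 1) :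
    SurjectiveOfNullity (R - algebraMap K _ ω) (p - C ω * q).natDegree := by
  refine of_mul_isUnit hq ?_
  have hclear : (R - algebraMap K _ ω) * aeval T q = aeval T (p - C ω * q) := by
    rw [sub_mul, hR, map_sub, map_mul, aeval_C]
  rw [hclear]
  exact aeval_of_splits (IsAlgClosed.splits _) hpq h

end SurjectiveOfNullity

theorem apply_eq_div_smul_of_mul_aeval_eq {K V : Type*} [Field K] [AddCommGroup V] [Module K V]
    {R T : Module.End K V} {p q : K[X]} (hR : R * aeval T q = aeval T p) {x : V} {ζ : K}
    (hx : T x = ζ • x) (hq : q.eval ζ ≠ 0) : R x = (p.eval ζ / q.eval ζ) • x := by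
  have h := congrArg (fun F : Module.End K V => F x) hR
  simp only [Module.End.mul_apply, Module.End.aeval_apply_of_mem_apply_eq_smul hx, map_smul] at h
  rw [div_eq_inv_mul, mul_smul, ← h, inv_smul_smul₀ hq]

theorem toLinearMap_aeval {𝕜 E : Type*} [NontriviallyNormedField 𝕜] [NormedAddCommGroup E]
    [NormedSpace 𝕜 E] (T : E →L[𝕜] E) (p : 𝕜[X]) :
    (aeval T p).toLinearMap = aeval (T.toLinearMap : Module.End 𝕜 E) p :=
  hom_eval₂ p (algebraMap 𝕜 (E →L[𝕜] E)) ContinuousLinearMap.toLinearMapRingHom T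

/-! ### Banach algebras -/

theorem exists_one_lt_mul_lt_one {r : ℝ} (h0 : 0 ≤ r) (h1 : r < 1) : ∃ ρ > 1, r * ρ < 1 :=
  ⟨2 / (1 + r), by rw [gt_iff_lt, one_lt_div] <;> linarith,
    by rw [mul_div_assoc', div_lt_one] <;> linarith⟩

section BanachAlgebra

variable {𝕜 A : Type*} [NormedRing A] [CompleteSpace A]

theorem isUnit_one_sub_smul_of_norm_pow_le [NormedField 𝕜] [NormedAlgebra 𝕜 A] {a : A}
    (ha : ∀ ρ > (1 : ℝ), ∃ C, ∀ n : ℕ, ‖a ^ n‖ ≤ C * ρ ^ n) {ζ : 𝕜} (hζ : ‖ζ‖ < 1) :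
    IsUnit (1 - ζ • a) := by
  obtain ⟨ρ, hρ, hζρ⟩ := exists_one_lt_mul_lt_one (norm_nonneg ζ) hζ
  obtain ⟨C, hC⟩ := ha ρ hρ
  have hsum : Summable ((ζ • a) ^ · : ℕ → A) := by
    refine .of_norm_bounded
      ((summable_geometric_of_lt_one (by positivity) hζρ).mul_left C) fun n => ?_
    calc ‖(ζ • a) ^ n‖ = ‖ζ‖ ^ n * ‖a ^ n‖ := by rw [_root_.smul_pow, norm_smul, norm_pow]
      _ ≤ ‖ζ‖ ^ n * (C * ρ ^ n) := by gcongr; exact hC n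
      _ = C * (‖ζ‖ * ρ) ^ n := by ring
  exact ⟨⟨_, _, hsum.one_sub_mul_tsum_pow, hsum.tsum_pow_mul_one_sub⟩, rfl⟩

/-- The powers of `a` are the Taylor coefficients at `0` of `ζ ↦ (1 - ζ a)⁻¹`, and modulo `K` this
function vanishes. -/
theorem pow_mem_of_eventually_inverse_mem [NontriviallyNormedField 𝕜] [NormedAlgebra 𝕜 A]
    {K : Submodule 𝕜 A} (hK : IsClosed (K : Set A)) {a : A}
    (h : ∀ᶠ ζ : 𝕜 in 𝓝 0, Ring.inverse (1 - ζ • a) ∈ K) (n : ℕ) : a ^ n ∈ K := by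
  have : IsClosed (K : Set A) := hK
  have hseries := K.mkQL.comp_hasFPowerSeriesOnBall
    (spectrum.hasFPowerSeriesOnBall_inverse_one_sub_smul 𝕜 a)
  have hzero := (hseries.hasFPowerSeriesAt.congr (g := 0)
    (h.mono fun ζ hζ => (Submodule.Quotient.mk_eq_zero K).2 hζ)).eq_zero
  have hcoeff : K.mkQL ((∏ _ : Fin n, (1 : 𝕜)) • a ^ n) = 0 :=
    congrArg (fun p : FormalMultilinearSeries 𝕜 𝕜 (A ⧸ K) => p n fun _ => 1) hzero
  rw [Finset.prod_const_one, one_smul] at hcoeff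
  exact (Submodule.Quotient.mk_eq_zero K).1 hcoeff

end BanachAlgebra

/-! ### Weighted composition operators on `ℓᵖ` -/

section WeightedComposition

variable {𝕜 E ι κ : Type*} [NontriviallyNormedField 𝕜] [NormedAddCommGroup E] [NormedSpace 𝕜 E]
  {p : ENNReal} [Fact (1 ≤ p)] {σ : κ → ι} {c : κ → 𝕜} {C : ℝ}

theorem sum_norm_smul_comp_rpow_le (hp : p ≠ ⊤) (hC : 0 ≤ C) (hc : ∀ k, ‖c k‖ ≤ C)
    (hσ : Set.InjOn σ (Function.support c)) (a : lp (fun _ : ι => E) p) (s : Finset κ) :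
    ∑ k ∈ s, ‖c k • a (σ k)‖ ^ p.toReal ≤ (C * ‖a‖) ^ p.toReal := by
  classical
  have hp0 : 0 < p.toReal := ENNReal.toReal_pos (zero_lt_one.trans_le Fact.out).ne' hp
  rw [Real.mul_rpow hC (norm_nonneg _)]
  calc ∑ k ∈ s, ‖c k • a (σ k)‖ ^ p.toReal
      = ∑ k ∈ s with c k ≠ 0, ‖c k • a (σ k)‖ ^ p.toReal := by
        refine (Finset.sum_filter_of_ne fun k _ hk => mt (fun hck => ?_) hk).symm
        rw [hck, zero_smul, norm_zero, Real.zero_rpow hp0.ne']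
    _ ≤ ∑ k ∈ s with c k ≠ 0, C ^ p.toReal * ‖a (σ k)‖ ^ p.toReal := by
        refine Finset.sum_le_sum fun k _ => ?_
        rw [← Real.mul_rpow hC (norm_nonneg _), norm_smul]
        gcongr
        exact hc k
    _ = C ^ p.toReal * ∑ i ∈ {k ∈ s | c k ≠ 0}.image σ, ‖a i‖ ^ p.toReal := by
        rw [Finset.sum_image, Finset.mul_sum]
        exact hσ.mono fun k hk => (Finset.mem_filter.1 hk).2
    _ ≤ C ^ p.toReal * ‖a‖ ^ p.toReal := by
        gcongr
        exact lp.sum_rpow_le_norm_rpow hp0 a _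

theorem norm_le_of_apply_eq_smul_comp (hp : p ≠ ⊤) (hC : 0 ≤ C) (hc : ∀ k, ‖c k‖ ≤ C)
    (hσ : Set.InjOn σ (Function.support c))
    {T : lp (fun _ : ι => E) p →L[𝕜] lp (fun _ : κ => E) p}
    (hT : ∀ a k, T a k = c k • a (σ k)) : ‖T‖ ≤ C := by
  refine T.opNorm_le_bound hC fun a => lp.norm_le_of_forall_sum_le ?_ (by positivity) fun s => ?_
  · exact ENNReal.toReal_pos (zero_lt_one.trans_le Fact.out).ne' hp
  · simpa only [hT] using sum_norm_smul_comp_rpow_le hp hC hc hσ a s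

theorem exists_apply_eq_smul_comp (hp : p ≠ ⊤) (hC : 0 ≤ C) (hc : ∀ k, ‖c k‖ ≤ C)
    (hσ : Set.InjOn σ (Function.support c)) :
    ∃ T : lp (fun _ : ι => E) p →L[𝕜] lp (fun _ : κ => E) p, ∀ a k, T a k = c k • a (σ k) := by
  have hbound := sum_norm_smul_comp_rpow_le (E := E) hp hC hc hσ
  let T : lp (fun _ : ι => E) p →ₗ[𝕜] lp (fun _ : κ => E) p :=
    { toFun a := ⟨fun k => c k • a (σ k), memℓp_gen' (hbound a)⟩
      map_add' a b := lp.ext (funext fun k => smul_add (c k) (a (σ k)) (b (σ k)))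
      map_smul' r a := lp.ext (funext fun k => smul_comm (c k) r (a (σ k))) }
  exact ⟨T.mkContinuous C fun a => lp.norm_le_of_forall_sum_le
    (ENNReal.toReal_pos (zero_lt_one.trans_le Fact.out).ne' hp) (by positivity) (hbound a),
    fun _ _ => rfl⟩

end WeightedComposition

/-! ### Power series with weighted square-summable coefficients -/

/-- The weights `β` for which every vector of the sequence model represents, through `repFun β`, a
power series convergent in the unit disk that determines it. -/
structure IsDiskWeight (β : ℕ → ℝ) : Prop where
  ne_zero : ∀ k, β k ≠ 0
  summable : ∀ r : ℝ, 0 ≤ r → r < 1 → Summable fun k => |β k|⁻¹ * r ^ k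

theorem repFun_smul (β : ℕ → ℝ) (c : ℂ) (a : H2) (z : ℂ) :
    repFun β (c • a) z = c * repFun β a z := by
  simp only [repFun, ← tsum_mul_left, lp.coeFn_smul, Pi.smul_apply, smul_eq_mul, mul_div_assoc,
    mul_assoc]

theorem repFun_zero_right (β : ℕ → ℝ) (a : H2) : repFun β a 0 = a 0 / β 0 := by
  rw [repFun, tsum_eq_single 0 fun k hk => by rw [zero_pow hk, mul_zero], pow_zero, mul_one]

theorem repFun_single_zero (β : ℕ → ℝ) (c z : ℂ) :
    repFun β (lp.single 2 0 c) z = c / β 0 := by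
  rw [repFun, tsum_eq_single 0 fun k hk => by simp [hk]]
  simp

namespace IsDiskWeight

variable {β : ℕ → ℝ}

theorem summable_norm_mul_pow (hβ : IsDiskWeight β) (a : H2) {r : ℝ} (h0 : 0 ≤ r) (h1 : r < 1) :
    Summable fun k => ‖a k / (β k : ℂ)‖ * r ^ k := by
  refine .of_nonneg_of_le (fun k => by positivity) (fun k => ?_)
    ((hβ.summable r h0 h1).mul_left ‖a‖)
  rw [norm_div, Complex.norm_real, Real.norm_eq_abs, div_eq_mul_inv, mul_assoc]
  gcongr
  exact lp.norm_apply_le_norm two_ne_zero a k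

theorem summable_repFun (hβ : IsDiskWeight β) (a : H2) {z : ℂ} (hz : z ∈ unitDisk) :
    Summable fun k => a k / (β k : ℂ) * z ^ k := by
  refine .of_norm ?_
  simpa only [norm_mul, norm_pow] using
    hβ.summable_norm_mul_pow a (norm_nonneg z) (mem_ball_zero_iff.1 hz)

theorem repFun_add (hβ : IsDiskWeight β) (a b : H2) {z : ℂ} (hz : z ∈ unitDisk) :
    repFun β (a + b) z = repFun β a z + repFun β b z := by
  rw [repFun, repFun, repFun, ← (hβ.summable_repFun a hz).tsum_add (hβ.summable_repFun b hz)]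
  simp only [lp.coeFn_add, Pi.add_apply, add_div, add_mul]

theorem eq_zero_of_repFun_eq_zero (hβ : IsDiskWeight β) {a : H2}
    (ha : ∀ z ∈ unitDisk, repFun β a z = 0) : a = 0 := by
  let p := FormalMultilinearSeries.ofScalars ℂ (fun k => a k / (β k : ℂ))
  have hradius : (2⁻¹ : NNReal) ≤ p.radius := by
    refine p.le_radius_of_summable_norm ?_
    simpa [p, FormalMultilinearSeries.ofScalars_norm] using
      hβ.summable_norm_mul_pow a (r := 2⁻¹) (by norm_num) (by norm_num)
  have hp : HasFPowerSeriesAt (0 : ℂ → ℂ) p 0 := by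
    refine (p.hasFPowerSeriesOnBall (lt_of_lt_of_le (by simp) hradius)).hasFPowerSeriesAt.congr ?_
    filter_upwards [Metric.ball_mem_nhds (0 : ℂ) one_pos] with z hz
    rw [Pi.zero_apply, ← ha z hz]
    simp [FormalMultilinearSeries.sum, p, repFun, mul_comm]
  ext k
  have hcoeff : a k / (β k : ℂ) = 0 :=
    (FormalMultilinearSeries.coeff_ofScalars (p := fun k => a k / (β k : ℂ))).symm.trans
      (congrArg (fun q : FormalMultilinearSeries ℂ ℂ ℂ => q.coeff k) hp.eq_zero)
  exact (div_eq_zero_iff.1 hcoeff).resolve_right (ofReal_ne_zero.2 (hβ.ne_zero k))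

theorem repFun_sub (hβ : IsDiskWeight β) (a b : H2) {z : ℂ} (hz : z ∈ unitDisk) :
    repFun β (a - b) z = repFun β a z - repFun β b z := by
  rw [eq_sub_iff_add_eq, ← hβ.repFun_add _ _ hz, sub_add_cancel]

theorem eq_of_repFun_eq (hβ : IsDiskWeight β) {a b : H2}
    (h : ∀ z ∈ unitDisk, repFun β a z = repFun β b z) : a = b :=
  sub_eq_zero.1 <| hβ.eq_zero_of_repFun_eq_zero fun z hz => by
    rw [hβ.repFun_sub a b hz, h z hz, sub_self]

end IsDiskWeight

namespace RepMul

variable {β : ℕ → ℝ} {f g : ℂ → ℂ} {T U : H2 →L[ℂ] H2}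

theorem congr (hT : RepMul β f T) (hfg : Set.EqOn f g unitDisk) : RepMul β g T := fun a z hz => by
  rw [hT a z hz, hfg hz]

theorem mul (hT : RepMul β f T) (hU : RepMul β g U) : RepMul β (f * g) (T * U) := fun a z hz => by
  rw [mul_apply_eq_comp, hT _ z hz, hU _ z hz, Pi.mul_apply, mul_assoc]

theorem add (hβ : IsDiskWeight β) (hT : RepMul β f T) (hU : RepMul β g U) :
    RepMul β (f + g) (T + U) := fun a z hz => by
  rw [add_apply, hβ.repFun_add _ _ hz, hT _ z hz, hU _ z hz, Pi.add_apply,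
    add_mul]

theorem const (β : ℕ → ℝ) (c : ℂ) : RepMul β (fun _ => c) (algebraMap ℂ _ c) := fun a z _ =>
  repFun_smul β c a z

theorem aeval (hβ : IsDiskWeight β) (hT : RepMul β f T) (p : ℂ[X]) :
    RepMul β (fun z => p.eval (f z)) (aeval T p) := by
  induction p using Polynomial.induction_on with
  | C c => simpa only [eval_C, aeval_C] using const β c
  | add p q hp hq =>
    simp only [eval_add, map_add]
    exact hp.add hβ hq
  | monomial n c ih =>
    simp only [pow_succ, ← mul_assoc, eval_mul_X, map_mul _ _ X, aeval_X]
    exact ih.mul hT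

theorem eq (hβ : IsDiskWeight β) (hT : RepMul β f T) (hU : RepMul β f U) : T = U :=
  ContinuousLinearMap.ext fun a => hβ.eq_of_repFun_eq fun z hz => by rw [hT a z hz, hU a z hz]

end RepMul

/-! ### Weights with subexponential ratios -/

/-- The ratios `β (k + n) / β k` and their inverses grow subexponentially in `n`, uniformly in `k`.
By the spectral radius formula, this is what keeps the spectra of the forward and backward shifts
with weight `β` inside the closed unit disk. -/
structure HasSubexponentialRatios (β : ℕ → ℝ) : Prop where
  pos : ∀ k, 0 < β k
  ratio_le : ∀ ρ > (1 : ℝ), ∃ C, ∀ n k, β (k + n) / β k ≤ C * ρ ^ n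
  inv_ratio_le : ∀ ρ > (1 : ℝ), ∃ C, ∀ n k, β k / β (k + n) ≤ C * ρ ^ n

theorem HasSubexponentialRatios.isDiskWeight {β : ℕ → ℝ} (hβ : HasSubexponentialRatios β) :
    IsDiskWeight β where
  ne_zero k := (hβ.pos k).ne'
  summable r h0 h1 := by
    obtain ⟨ρ, hρ, hrρ⟩ := exists_one_lt_mul_lt_one h0 h1
    obtain ⟨C, hC⟩ := hβ.inv_ratio_le ρ hρ
    refine .of_nonneg_of_le (fun k => by positivity) (fun k => ?_)
      ((summable_geometric_of_lt_one (by positivity) hrρ).mul_left ((β 0)⁻¹ * C))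
    have hk : (β k)⁻¹ = (β 0)⁻¹ * (β 0 / β (0 + k)) := by
      rw [zero_add, div_eq_mul_inv, inv_mul_cancel_left₀ (hβ.pos 0).ne']
    have hβ0 := hβ.pos 0
    calc |β k|⁻¹ * r ^ k = (β 0)⁻¹ * (β 0 / β (0 + k)) * r ^ k := by rw [abs_of_pos (hβ.pos k), hk]
      _ ≤ (β 0)⁻¹ * (C * ρ ^ k) * r ^ k := by gcongr; exact hC k 0
      _ = (β 0)⁻¹ * C * (r * ρ) ^ k := by ring

/-- Only finitely many factors exceed `ρ`, and `C` is the product of their excesses `w i / ρ`. -/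
theorem exists_prod_le_mul_pow_card {ι : Type*} {w : ι → ℝ} {ρ : ℝ} (hρ : 0 < ρ)
    (hw : ∀ᶠ i in cofinite, w i ≤ ρ) :
    ∃ C, ∀ s : Finset ι, (∀ i ∈ s, 0 ≤ w i) → ∏ i ∈ s, w i ≤ C * ρ ^ s.card := by
  classical
  let v i := max 1 (w i / ρ)
  have hv1 i : 1 ≤ v i := le_max_left _ _
  let t : Finset ι := Set.Finite.toFinset hw
  have hvt i (hi : i ∉ t) : v i = 1 :=
    max_eq_left ((div_le_one hρ).2 (of_not_not (mt (Set.Finite.mem_toFinset hw).2 hi)))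
  refine ⟨∏ i ∈ t, v i, fun s hs => ?_⟩
  calc ∏ i ∈ s, w i ≤ ∏ i ∈ s, v i * ρ :=
        Finset.prod_le_prod hs fun i _ => (div_le_iff₀ hρ).1 (le_max_right _ _)
    _ = (∏ i ∈ s, v i) * ρ ^ s.card := by rw [Finset.prod_mul_distrib, Finset.prod_const]
    _ ≤ (∏ i ∈ s ∪ t, v i) * ρ ^ s.card := by
        gcongr
        · exact fun i _ _ => hv1 i
        · exact Finset.subset_union_left
    _ = (∏ i ∈ t, v i) * ρ ^ s.card := by
        rw [Finset.prod_subset Finset.subset_union_right fun i _ hi => hvt i hi]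

theorem betaSeq_add (w : ℕ → ℝ) (k n : ℕ) :
    betaSeq w (k + n) = betaSeq w k * ∏ j ∈ Finset.Ioc k (k + n), w j :=
  (Finset.prod_Ioc_consecutive w k.zero_le (k.le_add_right n)).symm

theorem hasSubexponentialRatios_betaSeq {w : ℕ → ℝ} (hpos : ∀ k, 1 ≤ k → 0 < w k)
    (hlim : Tendsto w atTop (𝓝 1)) : HasSubexponentialRatios (betaSeq w) := by
  have hβ k : 0 < betaSeq w k := Finset.prod_pos fun j hj => hpos j (Finset.mem_Icc.1 hj).1
  have hIoc (k n j : ℕ) (hj : j ∈ Finset.Ioc k (k + n)) : 0 < w j :=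
    hpos j (k.zero_le.trans_lt (Finset.mem_Ioc.1 hj).1)
  have hratio k n : betaSeq w (k + n) / betaSeq w k = ∏ j ∈ Finset.Ioc k (k + n), w j := by
    rw [betaSeq_add, mul_div_cancel_left₀ _ (hβ k).ne']
  refine ⟨hβ, fun ρ hρ => ?_, fun ρ hρ => ?_⟩
  · have hw : ∀ᶠ j in cofinite, w j ≤ ρ := by
      rw [Nat.cofinite_eq_atTop]
      exact hlim.eventually_le_const hρ
    obtain ⟨C, hC⟩ := exists_prod_le_mul_pow_card (zero_lt_one.trans hρ) hw
    refine ⟨C, fun n k => ?_⟩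
    simpa [hratio] using hC (Finset.Ioc k (k + n)) fun j hj => (hIoc k n j hj).le
  · have hw : ∀ᶠ j in cofinite, (w j)⁻¹ ≤ ρ := by
      rw [Nat.cofinite_eq_atTop]
      exact (hlim.inv₀ one_ne_zero).eventually_le_const (by rwa [inv_one])
    obtain ⟨C, hC⟩ := exists_prod_le_mul_pow_card (zero_lt_one.trans hρ) hw
    refine ⟨C, fun n k => ?_⟩
    rw [← inv_div, hratio, ← Finset.prod_inv_distrib]
    simpa using hC (Finset.Ioc k (k + n)) fun j hj => (inv_pos.2 (hIoc k n j hj)).le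

/-! ### Weighted shifts -/

/-- The sequence-space form of multiplication by `z`. -/
def IsForwardShift (β : ℕ → ℝ) (M : H2 →L[ℂ] H2) : Prop :=
  ∀ a, M a 0 = 0 ∧ ∀ k, M a (k + 1) = ((β (k + 1) / β k : ℝ) : ℂ) * a k

/-- The sequence-space form of the left inverse `f ↦ (f - f 0) / z` of multiplication by `z`. -/
def IsBackwardShift (β : ℕ → ℝ) (S : H2 →L[ℂ] H2) : Prop :=
  ∀ a k, S a k = ((β k / β (k + 1) : ℝ) : ℂ) * a (k + 1)

/-- The coefficients `c` for which the `n`-th power of the forward shift is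
`a ↦ fun k => c k * a (k - n)`; below `n`, where `k - n` is truncated, they vanish. -/
def forwardShiftCoeff (β : ℕ → ℝ) (n k : ℕ) : ℂ :=
  if n ≤ k then ((β k / β (k - n) : ℝ) : ℂ) else 0

theorem injOn_sub_support_forwardShiftCoeff (β : ℕ → ℝ) (n : ℕ) :
    Set.InjOn (· - n) (Function.support (forwardShiftCoeff β n)) := by
  have hle {k} (hk : k ∈ Function.support (forwardShiftCoeff β n)) : n ≤ k :=
    of_not_not fun h => hk (if_neg h)
  intro k hk l hl hkl
  have := hle hk
  have := hle hl
  grind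

theorem forwardShiftCoeff_succ_succ {β : ℕ → ℝ} (hβ : ∀ k, β k ≠ 0) (n k : ℕ) :
    forwardShiftCoeff β (n + 1) (k + 1) =
      ((β (k + 1) / β k : ℝ) : ℂ) * forwardShiftCoeff β n k := by
  simp only [forwardShiftCoeff, Nat.add_le_add_iff_right, Nat.add_sub_add_right, mul_ite, mul_zero,
    ← ofReal_mul, div_mul_div_cancel₀ (hβ k)]

section WeightedShifts

variable {β : ℕ → ℝ} {M S : H2 →L[ℂ] H2}

theorem norm_forwardShiftCoeff_le (hβ : ∀ k, 0 < β k) {n : ℕ} {C : ℝ}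
    (hC : ∀ k, β (k + n) / β k ≤ C) (k : ℕ) : ‖forwardShiftCoeff β n k‖ ≤ C := by
  unfold forwardShiftCoeff
  split_ifs with hn
  · obtain ⟨k, rfl⟩ := Nat.exists_eq_add_of_le' hn
    rw [Nat.add_sub_cancel, norm_real, Real.norm_of_nonneg (div_pos (hβ _) (hβ _)).le]
    exact hC k
  · rw [norm_zero]
    exact (div_pos (hβ _) (hβ 0)).le.trans (hC 0)

namespace IsForwardShift

theorem pow_apply_eq (hβ : ∀ k, β k ≠ 0) (hM : IsForwardShift β M) (n : ℕ) (a : H2) (k : ℕ) :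
    (M ^ n) a k = forwardShiftCoeff β n k * a (k - n) := by
  induction n generalizing k with
  | zero => simp [forwardShiftCoeff, hβ k]
  | succ n ih =>
    rw [pow_succ', mul_apply_eq_comp]
    cases k with
    | zero => simpa [forwardShiftCoeff] using (hM _).1
    | succ k =>
      rw [(hM _).2, ih, forwardShiftCoeff_succ_succ hβ, Nat.add_sub_add_right, mul_assoc]

theorem exists_norm_pow_le (hβ : HasSubexponentialRatios β) (hM : IsForwardShift β M) {ρ : ℝ}
    (hρ : 1 < ρ) : ∃ C, ∀ n, ‖M ^ n‖ ≤ C * ρ ^ n := by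
  obtain ⟨C, hC⟩ := hβ.ratio_le ρ hρ
  refine ⟨C, fun n => ?_⟩
  have hCn := (div_pos (hβ.pos _) (hβ.pos 0)).le.trans (hC n 0)
  exact norm_le_of_apply_eq_smul_comp ENNReal.ofNat_ne_top hCn
    (norm_forwardShiftCoeff_le hβ.pos (hC n)) (injOn_sub_support_forwardShiftCoeff β n)
    (hM.pow_apply_eq (fun k => (hβ.pos k).ne') n)

theorem isUnit_one_sub_smul (hβ : HasSubexponentialRatios β) (hM : IsForwardShift β M) {ζ : ℂ}
    (hζ : ‖ζ‖ < 1) : IsUnit (1 - ζ • M) :=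
  isUnit_one_sub_smul_of_norm_pow_le (fun _ => hM.exists_norm_pow_le hβ) hζ

theorem repMul (hβ : IsDiskWeight β) (hM : IsForwardShift β M) : RepMul β id M := by
  intro a z hz
  rw [repFun, (hβ.summable_repFun (M a) hz).tsum_eq_zero_add, (hM a).1, zero_div, zero_mul,
    zero_add, repFun, ← tsum_mul_left]
  refine tsum_congr fun k => ?_
  have hk : (β k : ℂ) ≠ 0 := ofReal_ne_zero.2 (hβ.ne_zero k)
  have hk1 : (β (k + 1) : ℂ) ≠ 0 := ofReal_ne_zero.2 (hβ.ne_zero (k + 1))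
  rw [(hM a).2, ofReal_div, id_eq]
  field_simp
  ring

theorem pow_single_zero (hβ : ∀ k, β k ≠ 0) (hM : IsForwardShift β M) (n : ℕ) :
    (M ^ n) (lp.single 2 0 1) = ((β n / β 0 : ℝ) : ℂ) • lp.single 2 n 1 := by
  ext k
  rw [hM.pow_apply_eq hβ, lp.coeFn_smul, Pi.smul_apply, smul_eq_mul]
  rcases lt_trichotomy k n with hk | rfl | hk
  · simp [forwardShiftCoeff, hk.not_ge, hk.ne]
  · simp [forwardShiftCoeff]
  · simp [Nat.sub_ne_zero_of_lt hk, hk.ne']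

theorem eq_top_of_pow_single_zero_mem (hβ : ∀ k, β k ≠ 0) (hM : IsForwardShift β M)
    {K : Submodule ℂ H2} (hK : IsClosed (K : Set H2))
    (h : ∀ n, (M ^ n) (lp.single 2 0 1) ∈ K) : K = ⊤ := by
  have hsingle (n : ℕ) (c : ℂ) : lp.single 2 n c ∈ K := by
    have hn : ((β n / β 0 : ℝ) : ℂ) ≠ 0 := ofReal_ne_zero.2 (div_ne_zero (hβ n) (hβ 0))
    have hmem := h n
    rw [hM.pow_single_zero hβ, K.smul_mem_iff hn] at hmem
    simpa [← lp.single_smul] using K.smul_mem c hmem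
  exact eq_top_iff.2 fun a _ =>
    hK.mem_of_tendsto (lp.hasSum_single ENNReal.ofNat_ne_top a) <|
      Eventually.of_forall fun s => K.sum_mem fun n _ => hsingle n (a n)

end IsForwardShift

theorem exists_isForwardShift (hβ : HasSubexponentialRatios β) :
    ∃ M : H2 →L[ℂ] H2, IsForwardShift β M := by
  obtain ⟨C, hC⟩ := hβ.ratio_le 2 one_lt_two
  have hC1 := (div_pos (hβ.pos _) (hβ.pos 0)).le.trans (hC 1 0)
  obtain ⟨M, hM⟩ := exists_apply_eq_smul_comp (E := ℂ) (p := 2) ENNReal.ofNat_ne_top hC1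
    (norm_forwardShiftCoeff_le hβ.pos (hC 1)) (injOn_sub_support_forwardShiftCoeff β 1)
  exact ⟨M, fun a => ⟨by simp [hM, forwardShiftCoeff], fun k => by simp [hM, forwardShiftCoeff]⟩⟩

theorem RepS.isBackwardShift (hβ : HasSubexponentialRatios β) (hS : RepS β S) :
    IsBackwardShift β S := by
  obtain ⟨M, hM⟩ := exists_isForwardShift hβ
  have hw := hβ.isDiskWeight
  have hMS (a : H2) : M (S a) = a - lp.single 2 0 (a 0) := by
    refine hw.eq_of_repFun_eq fun z hz => ?_
    rw [hM.repMul hw _ z hz, hw.repFun_sub _ _ hz, repFun_single_zero, ← repFun_zero_right, id_eq]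
    rcases eq_or_ne z 0 with rfl | hz0
    · rw [zero_mul, sub_self]
    · rw [hS a z hz hz0, mul_div_cancel₀ _ hz0]
  intro a k
  have hk : ((β k / β (k + 1) : ℝ) : ℂ) * ((β (k + 1) / β k : ℝ) : ℂ) = 1 := by
    rw [← ofReal_mul, div_mul_div_cancel₀ (hβ.pos _).ne', div_self (hβ.pos _).ne', ofReal_one]
  have hcoord := (hM (S a)).2 k
  rw [hMS] at hcoord
  rw [show a (k + 1) = ((β (k + 1) / β k : ℝ) : ℂ) * S a k by simpa using hcoord, ← mul_assoc, hk,
    one_mul]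

namespace IsBackwardShift

theorem pow_apply_eq (hβ : ∀ k, β k ≠ 0) (hS : IsBackwardShift β S) (n : ℕ) (a : H2) (k : ℕ) :
    (S ^ n) a k = ((β k / β (k + n) : ℝ) : ℂ) * a (k + n) := by
  induction n generalizing k with
  | zero => simp [hβ k]
  | succ n ih =>
    rw [pow_succ', mul_apply_eq_comp, hS, ih, ← mul_assoc, ← ofReal_mul,
      div_mul_div_cancel₀ (hβ _), Nat.succ_add_eq_add_succ]

theorem exists_norm_pow_le (hβ : HasSubexponentialRatios β) (hS : IsBackwardShift β S) {ρ : ℝ}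
    (hρ : 1 < ρ) : ∃ C, ∀ n, ‖S ^ n‖ ≤ C * ρ ^ n := by
  obtain ⟨C, hC⟩ := hβ.inv_ratio_le ρ hρ
  refine ⟨C, fun n => ?_⟩
  have hCn := (div_pos (hβ.pos _) (hβ.pos _)).le.trans (hC n 0)
  refine norm_le_of_apply_eq_smul_comp ENNReal.ofNat_ne_top hCn (fun k => ?_)
    (add_left_injective n).injOn (hS.pow_apply_eq (fun k => (hβ.pos k).ne') n)
  rw [norm_real, Real.norm_of_nonneg (div_pos (hβ.pos _) (hβ.pos _)).le]
  exact hC n k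

theorem isUnit_one_sub_smul (hβ : HasSubexponentialRatios β) (hS : IsBackwardShift β S) {ζ : ℂ}
    (hζ : ‖ζ‖ < 1) : IsUnit (1 - ζ • S) :=
  isUnit_one_sub_smul_of_norm_pow_le (fun _ => hS.exists_norm_pow_le hβ) hζ

theorem mul_forwardShift (hβ : ∀ k, β k ≠ 0) (hS : IsBackwardShift β S)
    (hM : IsForwardShift β M) : S * M = 1 := by
  ext a k
  rw [mul_apply_eq_comp, hS, (hM a).2, ← mul_assoc, ← ofReal_mul, div_mul_div_cancel₀ (hβ _),
    div_self (hβ k), ofReal_one, one_mul, one_apply_eq_self]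

theorem apply_single_zero (hS : IsBackwardShift β S) (c : ℂ) : S (lp.single 2 0 c) = 0 := by
  ext k
  simp [hS _ k]

theorem ker_eq_span (hβ : ∀ k, β k ≠ 0) (hS : IsBackwardShift β S) :
    LinearMap.ker S.toLinearMap = ℂ ∙ (lp.single 2 0 1 : H2) := by
  refine le_antisymm (fun a ha => Submodule.mem_span_singleton.2 ⟨a 0, ?_⟩)
    ((Submodule.span_singleton_le_iff_mem _ _).2 (hS.apply_single_zero 1))
  ext k
  cases k with
  | zero => simp
  | succ k =>
    have hak : ((β k / β (k + 1) : ℝ) : ℂ) * a (k + 1) = 0 := by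
      rw [← hS a k, show S a = 0 from ha, lp.coeFn_zero, Pi.zero_apply]
    rw [(mul_eq_zero.1 hak).resolve_left (ofReal_ne_zero.2 (div_ne_zero (hβ _) (hβ _)))]
    simp

theorem surjectiveOfNullity_one (hβ : ∀ k, β k ≠ 0) (hS : IsBackwardShift β S)
    (hM : IsForwardShift β M) : SurjectiveOfNullity S.toLinearMap 1 := by
  refine ⟨fun a => ⟨M a, ?_⟩, ?_⟩
  · exact congrArg (fun T : H2 →L[ℂ] H2 => T a) (hS.mul_forwardShift hβ hM)
  · rw [Nat.cast_one, Module.rank_eq_one_iff_finrank_eq_one, hS.ker_eq_span hβ]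
    refine finrank_span_singleton fun h => one_ne_zero (α := ℂ) ?_
    simpa using congrArg (fun a : H2 => a 0) h

end IsBackwardShift

end WeightedShifts

/-! ### Blaschke products as quotients of polynomials -/

theorem mem_unitDisk {z : ℂ} : z ∈ unitDisk ↔ ‖z‖ < 1 := mem_ball_zero_iff

theorem normSq_one_sub_conj_mul_sub_normSq_sub (z ζ : ℂ) :
    normSq (1 - starRingEnd ℂ z * ζ) - normSq (z - ζ) = (1 - normSq z) * (1 - normSq ζ) := by
  simp only [normSq_apply, sub_re, one_re, mul_re, conj_re, conj_im, sub_im, one_im, mul_im]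
  ring

theorem norm_sub_lt_norm_one_sub_conj_mul {z ζ : ℂ} (hz : ‖z‖ < 1) (hζ : ‖ζ‖ < 1) :
    ‖z - ζ‖ < ‖1 - starRingEnd ℂ z * ζ‖ := by
  have hsq := normSq_one_sub_conj_mul_sub_normSq_sub z ζ
  simp only [normSq_eq_norm_sq] at hsq
  have hpos : 0 < (1 - ‖z‖ ^ 2) * (1 - ‖ζ‖ ^ 2) :=
    mul_pos (by nlinarith [norm_nonneg z]) (by nlinarith [norm_nonneg ζ])
  exact lt_of_pow_lt_pow_left₀ 2 (norm_nonneg _) (by linarith)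

theorem norm_one_sub_conj_mul_le_norm_sub {z ζ : ℂ} (hz : ‖z‖ < 1) (hζ : 1 ≤ ‖ζ‖) :
    ‖1 - starRingEnd ℂ z * ζ‖ ≤ ‖z - ζ‖ := by
  have hsq := normSq_one_sub_conj_mul_sub_normSq_sub z ζ
  simp only [normSq_eq_norm_sq] at hsq
  have hpos : 0 ≤ (1 - ‖z‖ ^ 2) * (‖ζ‖ ^ 2 - 1) :=
    mul_nonneg (by nlinarith [norm_nonneg z]) (by nlinarith)
  exact le_of_sq_le_sq (by linarith) (norm_nonneg _)

theorem natDegree_C_sub_X_le {R : Type*} [Ring R] (a : R) : (C a - X).natDegree ≤ 1 := by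
  compute_degree

theorem natDegree_one_sub_C_mul_X_le {R : Type*} [Ring R] (a : R) :
    (1 - C a * X).natDegree ≤ 1 := by
  compute_degree

section BlaschkePolynomials

variable {ι : Type*} [Fintype ι] {zs : ι → ℂ}

/-- The numerator of the Blaschke product with zeros `zs`. -/
def blaschkeNum (zs : ι → ℂ) : ℂ[X] := ∏ j, (C (zs j) - X)

/-- The denominator of the Blaschke product with zeros `zs`. -/
def blaschkeDen (zs : ι → ℂ) : ℂ[X] := ∏ j, (1 - C (starRingEnd ℂ (zs j)) * X)

theorem eval_blaschkeNum (zs : ι → ℂ) (ζ : ℂ) : (blaschkeNum zs).eval ζ = ∏ j, (zs j - ζ) := by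
  simp [blaschkeNum, eval_prod]

theorem eval_blaschkeDen (zs : ι → ℂ) (ζ : ℂ) :
    (blaschkeDen zs).eval ζ = ∏ j, (1 - starRingEnd ℂ (zs j) * ζ) := by
  simp [blaschkeDen, eval_prod]

theorem prod_mobius (zs : ι → ℂ) (ζ : ℂ) :
    ∏ j, mobius (zs j) ζ = (blaschkeNum zs).eval ζ / (blaschkeDen zs).eval ζ := by
  simp only [mobius, Finset.prod_div_distrib, eval_blaschkeNum, eval_blaschkeDen]

theorem norm_eval_blaschkeNum_lt [Nonempty ι] (hzs : ∀ j, ‖zs j‖ < 1) {ζ : ℂ} (hζ : ‖ζ‖ < 1) :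
    ‖(blaschkeNum zs).eval ζ‖ < ‖(blaschkeDen zs).eval ζ‖ := by
  have hlt j := norm_sub_lt_norm_one_sub_conj_mul (hzs j) hζ
  rw [eval_blaschkeNum, eval_blaschkeDen, norm_prod, norm_prod]
  by_cases hzero : ∃ j, zs j - ζ = 0
  · obtain ⟨j, hj⟩ := hzero
    rw [Finset.prod_eq_zero (Finset.mem_univ j) (by rw [hj, norm_zero])]
    exact Finset.prod_pos fun j _ => (norm_nonneg _).trans_lt (hlt j)
  · rw [not_exists] at hzero
    exact Finset.prod_lt_prod_of_nonempty (fun j _ => norm_pos_iff.2 (hzero j))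
      (fun j _ => hlt j) Finset.univ_nonempty

theorem eval_blaschkeDen_ne_zero (hzs : ∀ j, ‖zs j‖ < 1) {ζ : ℂ} (hζ : ‖ζ‖ < 1) :
    (blaschkeDen zs).eval ζ ≠ 0 := by
  rw [eval_blaschkeDen, Finset.prod_ne_zero_iff]
  exact fun j _ => norm_pos_iff.1 <|
    (norm_nonneg _).trans_lt (norm_sub_lt_norm_one_sub_conj_mul (hzs j) hζ)

theorem norm_lt_one_of_isRoot_blaschkeNum_sub (hzs : ∀ j, ‖zs j‖ < 1) {ω ζ : ℂ} (hω : ‖ω‖ < 1)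
    (hroot : (blaschkeNum zs - C ω * blaschkeDen zs).IsRoot ζ) : ‖ζ‖ < 1 := by
  by_contra! hζ
  have hle : ‖(blaschkeDen zs).eval ζ‖ ≤ ‖(blaschkeNum zs).eval ζ‖ := by
    rw [eval_blaschkeNum, eval_blaschkeDen, norm_prod, norm_prod]
    exact Finset.prod_le_prod (fun _ _ => norm_nonneg _) fun j _ =>
      norm_one_sub_conj_mul_le_norm_sub (hzs j) hζ
  have hnum : 0 < ‖(blaschkeNum zs).eval ζ‖ := by
    rw [eval_blaschkeNum, norm_pos_iff, Finset.prod_ne_zero_iff]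
    rintro j - hj
    rw [← sub_eq_zero.1 hj] at hζ
    exact (hzs j).not_ge hζ
  have heq : ‖(blaschkeNum zs).eval ζ‖ = ‖ω‖ * ‖(blaschkeDen zs).eval ζ‖ := by
    rw [IsRoot.def, eval_sub, eval_C_mul, sub_eq_zero] at hroot
    rw [hroot, norm_mul]
  nlinarith [norm_nonneg ω]

theorem natDegree_blaschkeNum_le (zs : ι → ℂ) : (blaschkeNum zs).natDegree ≤ Fintype.card ι := by
  refine (natDegree_prod_le _ _).trans ?_
  simpa only [smul_eq_mul, mul_one, Finset.card_univ] using
    Finset.sum_le_card_nsmul Finset.univ _ 1 fun j _ => natDegree_C_sub_X_le (zs j)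

theorem natDegree_blaschkeDen_le (zs : ι → ℂ) : (blaschkeDen zs).natDegree ≤ Fintype.card ι := by
  refine (natDegree_prod_le _ _).trans ?_
  simpa only [smul_eq_mul, mul_one, Finset.card_univ] using
    Finset.sum_le_card_nsmul Finset.univ _ 1 fun j _ =>
      natDegree_one_sub_C_mul_X_le (starRingEnd ℂ (zs j))

theorem coeff_card_blaschkeNum (zs : ι → ℂ) :
    (blaschkeNum zs).coeff (Fintype.card ι) = (-1) ^ Fintype.card ι := by
  have hcoeff := coeff_prod_of_natDegree_le (s := Finset.univ) (fun j => C (zs j) - X) 1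
    fun j _ => natDegree_C_sub_X_le (zs j)
  simpa [blaschkeNum, coeff_C] using hcoeff

theorem coeff_card_blaschkeDen (zs : ι → ℂ) :
    (blaschkeDen zs).coeff (Fintype.card ι) = ∏ j, -starRingEnd ℂ (zs j) := by
  have hcoeff := coeff_prod_of_natDegree_le (s := Finset.univ)
    (fun j => 1 - C (starRingEnd ℂ (zs j)) * X) 1
    fun j _ => natDegree_one_sub_C_mul_X_le (starRingEnd ℂ (zs j))
  simpa [blaschkeDen, coeff_one] using hcoeff

theorem coeff_card_blaschkeNum_sub_ne_zero (hzs : ∀ j, ‖zs j‖ < 1) {ω : ℂ} (hω : ‖ω‖ < 1) :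
    (blaschkeNum zs - C ω * blaschkeDen zs).coeff (Fintype.card ι) ≠ 0 := by
  rw [coeff_sub, coeff_C_mul, coeff_card_blaschkeNum, coeff_card_blaschkeDen, sub_ne_zero]
  intro heq
  have hprod : ∏ j, ‖zs j‖ ≤ 1 :=
    Finset.prod_le_one (fun _ _ => norm_nonneg _) fun j _ => (hzs j).le
  have hone : 1 = ‖ω‖ * ∏ j, ‖zs j‖ := by simpa [norm_prod] using congrArg norm heq
  exact hone.not_gt (mul_lt_one_of_nonneg_of_lt_one_left (norm_nonneg ω) hω hprod)

theorem natDegree_blaschkeNum_sub (hzs : ∀ j, ‖zs j‖ < 1) {ω : ℂ} (hω : ‖ω‖ < 1) :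
    (blaschkeNum zs - C ω * blaschkeDen zs).natDegree = Fintype.card ι :=
  natDegree_eq_of_le_of_coeff_ne_zero
    ((natDegree_sub_le _ _).trans <| max_le (natDegree_blaschkeNum_le zs) <|
      (natDegree_C_mul_le _ _).trans (natDegree_blaschkeDen_le zs))
    (coeff_card_blaschkeNum_sub_ne_zero hzs hω)

theorem isUnit_aeval_blaschkeDen {A : Type*} [Ring A] [Algebra ℂ A] {x : A}
    (hx : ∀ ζ : ℂ, ‖ζ‖ < 1 → IsUnit (1 - ζ • x)) (hzs : ∀ j, ‖zs j‖ < 1) :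
    IsUnit (aeval x (blaschkeDen zs)) := by
  refine Finset.prod_induction _ (fun p : ℂ[X] => IsUnit (aeval x p))
    (fun p q hp hq => map_mul (aeval x) p q ▸ hp.mul hq) (by simp) fun j _ => ?_
  simpa [Algebra.smul_def] using hx (starRingEnd ℂ (zs j)) (by simpa using hzs j)

end BlaschkePolynomials

theorem prod_ofFn_mul_aeval_prod {R A : Type*} [CommSemiring R] [Semiring A] [Algebra R A] (x : A) :
    ∀ {m : ℕ} {b : Fin m → A} {P Q : Fin m → R[X]},
      (∀ j, b j * aeval x (P j) = aeval x (Q j)) →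
        (List.ofFn b).prod * aeval x (∏ j, P j) = aeval x (∏ j, Q j)
  | 0, _, _, _, _ => by simp
  | m + 1, b, P, Q, h => by
    have ih := prod_ofFn_mul_aeval_prod x fun j : Fin m => h j.succ
    rw [List.ofFn_succ, List.prod_cons, Fin.prod_univ_succ, Fin.prod_univ_succ, mul_comm (P 0),
      map_mul, mul_assoc, ← mul_assoc _ _ (aeval x (P 0)), ih, ← map_mul, mul_comm _ (P 0),
      map_mul, map_mul, ← mul_assoc, h 0]

section BlaschkeBarOp

variable {m : ℕ} {zs : Fin m → ℂ} {S M : H2 →L[ℂ] H2}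

theorem blaschkeBarOp_mul_aeval_blaschkeDen (hS : ∀ ζ : ℂ, ‖ζ‖ < 1 → IsUnit (1 - ζ • S))
    (hzs : ∀ j, ‖zs j‖ < 1) :
    blaschkeBarOp zs S * aeval S (blaschkeDen (star zs)) = aeval S (blaschkeNum (star zs)) :=
  prod_ofFn_mul_aeval_prod S fun j => by
    have hfactor : aeval S (1 - C (starRingEnd ℂ (star zs j)) * X) = 1 - zs j • S := by
      simp [Algebra.smul_def]
    rw [hfactor, mul_assoc, Ring.inverse_mul_cancel _ (hS _ (hzs j)), mul_one]
    simp [Algebra.smul_def]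

/-- Since `S M = 1`, the numerator factor `z - M` of `B(M)` equals `-(1 - z S) M`. -/
theorem blaschkeBarOp_mul_aeval_blaschkeNum (hS : ∀ ζ : ℂ, ‖ζ‖ < 1 → IsUnit (1 - ζ • S))
    (hSM : S * M = 1) (hzs : ∀ j, ‖zs j‖ < 1) :
    blaschkeBarOp zs S * aeval M (blaschkeNum zs) = aeval M (blaschkeDen zs) :=
  prod_ofFn_mul_aeval_prod M fun j => by
    have hnum : aeval M (C (zs j) - X) = -((1 - zs j • S) * M) := by
      rw [sub_mul, smul_mul_assoc, hSM]
      simp [Algebra.smul_def]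
    have hden : aeval M (1 - C (starRingEnd ℂ (zs j)) * X) =
        -((starRingEnd ℂ (zs j) • 1 - S) * M) := by
      rw [sub_mul, smul_mul_assoc, hSM]
      simp [Algebra.smul_def]
    rw [hnum, hden, mul_neg, mul_assoc, ← mul_assoc (Ring.inverse _),
      Ring.inverse_mul_cancel _ (hS _ (hzs j)), one_mul]

theorem RepMul.mul_aeval_blaschkeDen {β : ℕ → ℝ} (hβ : IsDiskWeight β) (hM : RepMul β id M)
    (hzs : ∀ j, ‖zs j‖ < 1) {TB : H2 →L[ℂ] H2}
    (hTB : RepMul β (fun z => ∏ j, mobius (zs j) z) TB) :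
    TB * Polynomial.aeval M (blaschkeDen zs) = Polynomial.aeval M (blaschkeNum zs) :=
  RepMul.eq hβ (hTB.mul (hM.aeval hβ _)) <| (hM.aeval hβ _).congr fun z hz => by
    simp only [Pi.mul_apply, id_eq, prod_mobius,
      div_mul_cancel₀ _ (eval_blaschkeDen_ne_zero hzs (mem_unitDisk.1 hz))]

end BlaschkeBarOp

/-! ### Left inverses and the Cowen–Douglas class -/

theorem sub_algebraMap_eq_mul_one_sub_smul {R A : Type*} [CommRing R] [Ring A] [Algebra R A]
    {s t : A} (hst : s * t = 1) (ζ : R) : s - algebraMap R A ζ = s * (1 - ζ • t) := by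
  rw [mul_sub, mul_one, mul_smul_comm, hst, Algebra.algebraMap_eq_smul_one]

section LeftInverse

variable {𝕜 E : Type*} [NontriviallyNormedField 𝕜] [NormedAddCommGroup E] [NormedSpace 𝕜 E]
  {S M : E →L[𝕜] E}

theorem SurjectiveOfNullity.toLinearMap_sub_algebraMap {n : ℕ}
    (hS : SurjectiveOfNullity S.toLinearMap n) (hSM : S * M = 1) {ζ : 𝕜}
    (hζ : IsUnit (1 - ζ • M)) :
    SurjectiveOfNullity (S.toLinearMap - algebraMap 𝕜 (Module.End 𝕜 E) ζ) n := by
  have hunit := of_isUnit (hζ.map ContinuousLinearMap.toLinearMapRingHom)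
  have hfactor : S.toLinearMap - algebraMap 𝕜 (Module.End 𝕜 E) ζ =
      S.toLinearMap ∘ₗ (1 - ζ • M).toLinearMap :=
    congrArg ContinuousLinearMap.toLinearMap (sub_algebraMap_eq_mul_one_sub_smul hSM ζ)
  rw [hfactor]
  exact hS.comp hunit

theorem apply_inverse_one_sub_smul_apply (hSM : S * M = 1) {e : E} (he : S e = 0) {ζ : 𝕜}
    (hζ : IsUnit (1 - ζ • M)) :
    S (Ring.inverse (1 - ζ • M) e) = ζ • Ring.inverse (1 - ζ • M) e := by
  rw [← sub_eq_zero]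
  calc S (Ring.inverse (1 - ζ • M) e) - ζ • Ring.inverse (1 - ζ • M) e
      = (S - algebraMap 𝕜 _ ζ) (Ring.inverse (1 - ζ • M) e) := rfl
    _ = S (((1 - ζ • M) * Ring.inverse (1 - ζ • M)) e) := by
        rw [sub_algebraMap_eq_mul_one_sub_smul hSM, mul_apply_eq_comp, mul_apply_eq_comp]
    _ = 0 := by rw [Ring.mul_inverse_cancel _ hζ, one_apply_eq_self, he]

theorem pow_apply_mem_of_eigenvectors_mem [CompleteSpace E] (hSM : S * M = 1) {e : E}
    (he : S e = 0) (hM : ∀ ζ : 𝕜, ‖ζ‖ < 1 → IsUnit (1 - ζ • M)) {K : Submodule 𝕜 E}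
    (hK : IsClosed (K : Set E)) (h : ∀ ζ : 𝕜, ‖ζ‖ < 1 → ∀ x, S x = ζ • x → x ∈ K) (n : ℕ) :
    (M ^ n) e ∈ K := by
  let evalAt := ContinuousLinearMap.apply 𝕜 E e
  refine pow_mem_of_eventually_inverse_mem (K := K.comap evalAt.toLinearMap)
    (hK.preimage evalAt.continuous) ?_ n
  filter_upwards [Metric.ball_mem_nhds (0 : 𝕜) one_pos] with ζ hζ
  rw [mem_ball_zero_iff] at hζ
  exact h ζ hζ _ (apply_inverse_one_sub_smul_apply hSM he (hM ζ hζ))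

end LeftInverse

theorem inCowenDouglas_of_surjectiveOfNullity {T : H2 →L[ℂ] H2} {Ω : Set ℂ} {n : ℕ} (hn : n ≠ 0)
    (hT : ∀ ω ∈ Ω, SurjectiveOfNullity (T - ω • (1 : H2 →L[ℂ] H2)).toLinearMap n)
    (hdense : (⨆ ω ∈ Ω, LinearMap.ker
      (T - ω • (1 : H2 →L[ℂ] H2)).toLinearMap).topologicalClosure = ⊤) :
    InCowenDouglas n Ω T := by
  refine ⟨fun ω hω hunit => ?_, fun ω hω => LinearMap.range_eq_top.2 (hT ω hω).1, hdense,
    fun ω hω => (hT ω hω).finrank_ker_eq⟩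
  rw [spectrum.mem_resolventSet_iff, Algebra.algebraMap_eq_smul_one, IsUnit.sub_iff] at hunit
  exact (hT ω hω).not_isUnit hn (hunit.map ContinuousLinearMap.toLinearMapRingHom)

section CowenDouglas

variable {m : ℕ} {zs : Fin m → ℂ} {S : H2 →L[ℂ] H2}

theorem surjectiveOfNullity_blaschkeBarOp_sub (hzs : ∀ j, ‖zs j‖ < 1)
    (hS : ∀ ζ : ℂ, ‖ζ‖ < 1 → IsUnit (1 - ζ • S))
    (hker : ∀ ζ : ℂ, ‖ζ‖ < 1 →
      SurjectiveOfNullity (S.toLinearMap - algebraMap ℂ (Module.End ℂ H2) ζ) 1)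
    {ω : ℂ} (hω : ‖ω‖ < 1) :
    SurjectiveOfNullity (blaschkeBarOp zs S - ω • (1 : H2 →L[ℂ] H2)).toLinearMap m := by
  have hstar j : ‖star zs j‖ < 1 := by simpa using hzs j
  have hquot := congrArg ContinuousLinearMap.toLinearMap
    (blaschkeBarOp_mul_aeval_blaschkeDen hS hzs)
  have hden := (isUnit_aeval_blaschkeDen hS hstar).map ContinuousLinearMap.toLinearMapRingHom
  have hne : blaschkeNum (star zs) - C ω * blaschkeDen (star zs) ≠ 0 := fun h =>
    coeff_card_blaschkeNum_sub_ne_zero hstar hω (by rw [h, coeff_zero])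
  have hsurj := SurjectiveOfNullity.sub_algebraMap_of_mul_aeval_eq
    (R := (blaschkeBarOp zs S).toLinearMap) (T := S.toLinearMap)
    (by rwa [← toLinearMap_aeval, ← toLinearMap_aeval]) (by rwa [← toLinearMap_aeval]) hne
    fun ζ hζ => hker ζ (norm_lt_one_of_isRoot_blaschkeNum_sub hstar hω hζ)
  rwa [natDegree_blaschkeNum_sub hstar hω, Fintype.card_fin] at hsurj

theorem blaschkeBarOp_apply_of_apply_eq_smul (hzs : ∀ j, ‖zs j‖ < 1)
    (hS : ∀ ζ : ℂ, ‖ζ‖ < 1 → IsUnit (1 - ζ • S)) {ζ : ℂ} (hζ : ‖ζ‖ < 1) {x : H2}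
    (hx : S x = ζ • x) : blaschkeBarOp zs S x =
      ((blaschkeNum (star zs)).eval ζ / (blaschkeDen (star zs)).eval ζ) • x := by
  have hstar j : ‖star zs j‖ < 1 := by simpa using hzs j
  have hquot := congrArg ContinuousLinearMap.toLinearMap
    (blaschkeBarOp_mul_aeval_blaschkeDen hS hzs)
  exact apply_eq_div_smul_of_mul_aeval_eq (R := (blaschkeBarOp zs S).toLinearMap)
    (by rwa [← toLinearMap_aeval, ← toLinearMap_aeval]) hx (eval_blaschkeDen_ne_zero hstar hζ)

theorem mem_iSup_ker_blaschkeBarOp_sub [NeZero m] (hzs : ∀ j, ‖zs j‖ < 1)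
    (hS : ∀ ζ : ℂ, ‖ζ‖ < 1 → IsUnit (1 - ζ • S)) {ζ : ℂ} (hζ : ‖ζ‖ < 1) {x : H2}
    (hx : S x = ζ • x) : x ∈ ⨆ ω ∈ unitDisk, LinearMap.ker
      (blaschkeBarOp zs S - ω • (1 : H2 →L[ℂ] H2)).toLinearMap := by
  have hstar j : ‖star zs j‖ < 1 := by simpa using hzs j
  have hvalue : (blaschkeNum (star zs)).eval ζ / (blaschkeDen (star zs)).eval ζ ∈ unitDisk := by
    have hlt := norm_eval_blaschkeNum_lt hstar hζ
    rwa [mem_unitDisk, norm_div, div_lt_one ((norm_nonneg _).trans_lt hlt)]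
  exact Submodule.mem_iSup_of_mem _ <| Submodule.mem_iSup_of_mem hvalue <|
    sub_eq_zero.2 (blaschkeBarOp_apply_of_apply_eq_smul hzs hS hζ hx)

end CowenDouglas

section Conclusion

variable {β : ℕ → ℝ} {m : ℕ} {zs : Fin m → ℂ} {S M : H2 →L[ℂ] H2}

theorem inCowenDouglas_blaschkeBarOp (hβ : HasSubexponentialRatios β) [NeZero m]
    (hzs : ∀ j, ‖zs j‖ < 1) (hS : IsBackwardShift β S) (hM : IsForwardShift β M) :
    InCowenDouglas m unitDisk (blaschkeBarOp zs S) := by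
  have hβ0 k : β k ≠ 0 := (hβ.pos k).ne'
  have hSM := hS.mul_forwardShift hβ0 hM
  have hunitS (ζ : ℂ) (hζ : ‖ζ‖ < 1) := hS.isUnit_one_sub_smul hβ hζ
  have hunitM (ζ : ℂ) (hζ : ‖ζ‖ < 1) := hM.isUnit_one_sub_smul hβ hζ
  have hker (ζ : ℂ) (hζ : ‖ζ‖ < 1) :=
    (hS.surjectiveOfNullity_one hβ0 hM).toLinearMap_sub_algebraMap hSM (hunitM ζ hζ)
  refine inCowenDouglas_of_surjectiveOfNullity (NeZero.ne m)
    (fun ω hω => surjectiveOfNullity_blaschkeBarOp_sub hzs hunitS hker (mem_unitDisk.1 hω)) ?_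
  have hclosed := Submodule.isClosed_topologicalClosure (⨆ ω ∈ unitDisk, LinearMap.ker
    (blaschkeBarOp zs S - ω • (1 : H2 →L[ℂ] H2)).toLinearMap)
  exact hM.eq_top_of_pow_single_zero_mem hβ0 hclosed <|
    pow_apply_mem_of_eigenvectors_mem hSM (hS.apply_single_zero 1) hunitM hclosed
      fun ζ hζ x hx => Submodule.le_topologicalClosure _
        (mem_iSup_ker_blaschkeBarOp_sub hzs hunitS hζ hx)

theorem blaschkeBarOp_mul_eq_one (hβ : HasSubexponentialRatios β) (hzs : ∀ j, ‖zs j‖ < 1)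
    (hS : IsBackwardShift β S) (hM : IsForwardShift β M) {TB : H2 →L[ℂ] H2}
    (hTB : RepMul β (fun z => ∏ j, mobius (zs j) z) TB) : blaschkeBarOp zs S * TB = 1 := by
  have hunitM (ζ : ℂ) (hζ : ‖ζ‖ < 1) := hM.isUnit_one_sub_smul hβ hζ
  refine (isUnit_aeval_blaschkeDen hunitM hzs).mul_right_cancel ?_
  rw [mul_assoc, RepMul.mul_aeval_blaschkeDen hβ.isDiskWeight (hM.repMul hβ.isDiskWeight) hzs hTB,
    blaschkeBarOp_mul_aeval_blaschkeNum (fun ζ hζ => hS.isUnit_one_sub_smul hβ hζ)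
      (hS.mul_forwardShift (fun k => (hβ.pos k).ne') hM) hzs, one_mul]

end Conclusion

theorem statement6_general {β : ℕ → ℝ} (hβ : HasSubexponentialRatios β) {m : ℕ} (hm : 0 < m)
    {zs : Fin m → ℂ} (hzs : ∀ j, zs j ∈ unitDisk)
    {B : ℂ → ℂ} (hB : ∀ z, B z = ∏ j, mobius (zs j) z)
    {S : H2 →L[ℂ] H2} (hS : RepS β S) {TB : H2 →L[ℂ] H2} (hTB : RepMul β B TB) :
    InCowenDouglas m unitDisk (blaschkeBarOp zs S) ∧ blaschkeBarOp zs S * TB = 1 := by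
  have : NeZero m := ⟨hm.ne'⟩
  have hzs_norm j := mem_unitDisk.1 (hzs j)
  have hshift := hS.isBackwardShift hβ
  obtain ⟨M, hM⟩ := exists_isForwardShift hβ
  obtain rfl : B = fun z => ∏ j, mobius (zs j) z := funext hB
  exact ⟨inCowenDouglas_blaschkeBarOp hβ hzs_norm hshift hM,
    blaschkeBarOp_mul_eq_one hβ hzs_norm hshift hM hTB⟩

/-- Let `H²_β` come from a weight sequence `w_k → 1` and let
`B(z) = ∏_{j=1}^m (z_j - z)/(1 - conj z_j · z)` be a Blaschke product of order `m`.
With `S` the standard left inverse of `M_z` and `B̄(z) = conj (B (conj z))`, the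
operator `B̄(S)` lies in the Cowen–Douglas class `B_m(𝔻)` and `B̄(S) ∘ B(M_z) = I`. -/
theorem statement6 (w : ℕ → ℝ) (hpos : ∀ k, 1 ≤ k → 0 < w k)
    (hlim : Tendsto w atTop (nhds 1)) (m : ℕ) (hm : 0 < m)
    (zs : Fin m → ℂ) (hzs : ∀ j, zs j ∈ unitDisk)
    (B : ℂ → ℂ) (hB : ∀ z, B z = ∏ j, mobius (zs j) z)
    (S : H2 →L[ℂ] H2) (hS : RepS (betaSeq w) S)
    (TB : H2 →L[ℂ] H2) (hTB : RepMul (betaSeq w) B TB) :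
    InCowenDouglas m unitDisk (blaschkeBarOp zs S) ∧
      blaschkeBarOp zs S * TB = 1 := by
  exact statement6_general (hasSubexponentialRatios_betaSeq hpos hlim) hm hzs hB hS hTB
end
end
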